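/- arXiv:2211.00432 — 8 statements merged into one kernel-verified Lean document; each statement's English description precedes it below -/
import Mathlib

section
/- Let E be a topological space. Player α has a winning strategy in the Banach–Mazur game on E if and only if player α' has a winning strategy in the tandem Banach–Mazur game on E. -/
universe u v w

section BanachMazur

variable {E : Type*} [TopologicalSpace E]

/-- The `n`-th move of a play `V₁ ⊇ U₁ ⊇ V₂ ⊇ U₂ ⊇ …` of the Banach–Mazur game:
the moves of player β (the sets `Vᵢ`) sit at even indices and the moves of
player α (the sets `Uᵢ`) at odd ones. -/
def bmMove (V U : ℕ → Set E) (n : ℕ) : Set E :=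
  if n % 2 = 0 then V (n / 2) else U (n / 2)

/-- The history of the first `n` moves of a Banach–Mazur play (as a function that is
`∅` from index `n` onwards, so that a strategy can only use the past moves). -/
def bmHist (V U : ℕ → Set E) (n : ℕ) : ℕ → Set E :=
  fun i => if i < n then bmMove V U i else ∅

/-- A legal Banach–Mazur history of length `n`: the moves are nonempty open sets,
each contained in all the previous ones. -/
def BMLegalHist (n : ℕ) (h : ℕ → Set E) : Prop :=
  (∀ i < n, IsOpen (h i) ∧ (h i).Nonempty) ∧
    ∀ i j : ℕ, i < j → j < n → h j ⊆ h i

/-- A strategy for player β in the Banach–Mazur game: to every legal history of even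
length it assigns a nonempty open subset of the last move (its first move `V₁` is
unconstrained). -/
def IsBMBetaStrat (σ : ℕ → (ℕ → Set E) → Set E) : Prop :=
  ∀ (n : ℕ) (h : ℕ → Set E), BMLegalHist n h → n % 2 = 0 →
    IsOpen (σ n h) ∧ (σ n h).Nonempty ∧ (0 < n → σ n h ⊆ h (n - 1))

/-- A strategy for player α in the Banach–Mazur game: to every legal history of odd
length it assigns a nonempty open subset of the last move. -/
def IsBMAlphaStrat (σ : ℕ → (ℕ → Set E) → Set E) : Prop :=
  ∀ (n : ℕ) (h : ℕ → Set E), BMLegalHist n h → n % 2 = 1 →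
    IsOpen (σ n h) ∧ (σ n h).Nonempty ∧ σ n h ⊆ h (n - 1)

/-- The play `(V, U)` follows the β-strategy `σ`. -/
def BMFollowsBeta (σ : ℕ → (ℕ → Set E) → Set E) (V U : ℕ → Set E) : Prop :=
  ∀ k : ℕ, V k = σ (2 * k) (bmHist V U (2 * k))

/-- The play `(V, U)` follows the α-strategy `σ`. -/
def BMFollowsAlpha (σ : ℕ → (ℕ → Set E) → Set E) (V U : ℕ → Set E) : Prop :=
  ∀ k : ℕ, U k = σ (2 * k + 1) (bmHist V U (2 * k + 1))

/-- `σ` is a winning strategy for player α in the Banach–Mazur game: it is a strategy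
for α, and every play in which α follows `σ` and β plays legally (nonempty open sets,
each contained in the preceding move of α) satisfies `⋂ n, U n ≠ ∅`. -/
def BMAlphaWinning (σ : ℕ → (ℕ → Set E) → Set E) : Prop :=
  IsBMAlphaStrat σ ∧
    ∀ V U : ℕ → Set E, BMFollowsAlpha σ V U →
      (IsOpen (V 0) ∧ (V 0).Nonempty) →
      (∀ k : ℕ, IsOpen (V (k + 1)) ∧ (V (k + 1)).Nonempty ∧ V (k + 1) ⊆ U k) →
      (⋂ k, U k).Nonempty

/-- `σ` is a winning strategy for player β in the Banach–Mazur game: it is a strategy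
for β, and every play in which β follows `σ` and α plays legally satisfies
`⋂ n, U n = ∅`. -/
def BMBetaWinning (σ : ℕ → (ℕ → Set E) → Set E) : Prop :=
  IsBMBetaStrat σ ∧
    ∀ V U : ℕ → Set E, BMFollowsBeta σ V U →
      (∀ k : ℕ, IsOpen (U k) ∧ (U k).Nonempty ∧ U k ⊆ V k) →
      (⋂ k, U k) = ∅

end BanachMazur

section Tandem

variable {E : Type*} [TopologicalSpace E]

/-- The `n`-th move of a play of the tandem Banach–Mazur game, which is played in
the order `V₁, V₁', W₁, W₁', V₂, V₂', W₂, W₂', …` : player β' chooses the sets `Vᵢ`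
(indices `≡ 0 [MOD 4]`) and `Wᵢ` (indices `≡ 2 [MOD 4]`), player α' chooses the sets
`Vᵢ'` (indices `≡ 1 [MOD 4]`) and `Wᵢ'` (indices `≡ 3 [MOD 4]`). -/
def tandemMove (V V' W W' : ℕ → Set E) (n : ℕ) : Set E :=
  if n % 4 = 0 then V (n / 4)
  else if n % 4 = 1 then V' (n / 4)
  else if n % 4 = 2 then W (n / 4)
  else W' (n / 4)

/-- The history of the first `n` moves of a tandem play (as a function that is `∅`
from index `n` onwards, so that a strategy can only use the past moves). -/
def tandemHist (V V' W W' : ℕ → Set E) (n : ℕ) : ℕ → Set E :=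
  fun i => if i < n then tandemMove V V' W W' i else ∅

/-- A legal tandem history of length `n`: all moves are nonempty open sets, the moves
on the `V`-board (indices `≡ 0, 1 [MOD 4]`) are nested decreasingly, and so are the
moves on the `W`-board (indices `≡ 2, 3 [MOD 4]`). -/
def TandemLegalHist (n : ℕ) (h : ℕ → Set E) : Prop :=
  (∀ i < n, IsOpen (h i) ∧ (h i).Nonempty) ∧
  (∀ i j : ℕ, i < j → j < n → i % 4 < 2 → j % 4 < 2 → h j ⊆ h i) ∧
  (∀ i j : ℕ, i < j → j < n → 2 ≤ i % 4 → 2 ≤ j % 4 → h j ⊆ h i)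

/-- A strategy for player β' in the tandem game: to every legal history of even length
it assigns a nonempty open set, contained in the previous move on the same board
(the first moves `V₁` and `W₁`, at positions `0` and `2`, are unconstrained). -/
def IsTandemBetaStrat (σ : ℕ → (ℕ → Set E) → Set E) : Prop :=
  ∀ (n : ℕ) (h : ℕ → Set E), TandemLegalHist n h → n % 2 = 0 →
    IsOpen (σ n h) ∧ (σ n h).Nonempty ∧ (4 ≤ n → σ n h ⊆ h (n - 3))

/-- A strategy for player α' in the tandem game: to every legal history of odd length
it assigns a nonempty open subset of the immediately preceding move. -/
def IsTandemAlphaStrat (σ : ℕ → (ℕ → Set E) → Set E) : Prop :=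
  ∀ (n : ℕ) (h : ℕ → Set E), TandemLegalHist n h → n % 2 = 1 →
    IsOpen (σ n h) ∧ (σ n h).Nonempty ∧ σ n h ⊆ h (n - 1)

/-- The play `(V, V', W, W')` follows the β'-strategy `σ`. -/
def TandemFollowsBeta (σ : ℕ → (ℕ → Set E) → Set E) (V V' W W' : ℕ → Set E) : Prop :=
  ∀ k : ℕ, V k = σ (4 * k) (tandemHist V V' W W' (4 * k)) ∧
    W k = σ (4 * k + 2) (tandemHist V V' W W' (4 * k + 2))

/-- The play `(V, V', W, W')` follows the α'-strategy `σ`. -/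
def TandemFollowsAlpha (σ : ℕ → (ℕ → Set E) → Set E) (V V' W W' : ℕ → Set E) : Prop :=
  ∀ k : ℕ, V' k = σ (4 * k + 1) (tandemHist V V' W W' (4 * k + 1)) ∧
    W' k = σ (4 * k + 3) (tandemHist V V' W W' (4 * k + 3))

end Tandem

/-- `σ` is a winning strategy for player α' in the tandem Banach–Mazur game: it is a
strategy for α', and every play in which α' follows `σ` and β' plays legally
(nonempty open sets, each `V (k+1) ⊆ V' k` and `W (k+1) ⊆ W' k`) satisfies
`⋂ k, V k ≠ ∅` and `⋂ k, W k ≠ ∅`. -/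
def TandemAlphaWinning {E : Type*} [TopologicalSpace E] (σ : ℕ → (ℕ → Set E) → Set E) : Prop :=
  IsTandemAlphaStrat σ ∧
    ∀ V V' W W' : ℕ → Set E, TandemFollowsAlpha σ V V' W W' →
      (∀ k : ℕ, IsOpen (V k) ∧ (V k).Nonempty ∧ IsOpen (W k) ∧ (W k).Nonempty) →
      (∀ k : ℕ, V (k + 1) ⊆ V' k ∧ W (k + 1) ⊆ W' k) →
      (⋂ k, V k).Nonempty ∧ (⋂ k, W k).Nonempty

/-- `σ` is a winning strategy for player β' in the tandem Banach–Mazur game: it is a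
strategy for β', and in every play in which β' follows `σ` and α' plays legally
(nonempty open sets `V' k ⊆ V k`, `W' k ⊆ W k`) at least one of the intersections
`⋂ k, V k`, `⋂ k, W k` is empty. -/
def TandemBetaWinning {E : Type*} [TopologicalSpace E] (σ : ℕ → (ℕ → Set E) → Set E) : Prop :=
  IsTandemBetaStrat σ ∧
    ∀ V V' W W' : ℕ → Set E, TandemFollowsBeta σ V V' W W' →
      (∀ k : ℕ, IsOpen (V' k) ∧ (V' k).Nonempty ∧ IsOpen (W' k) ∧ (W' k).Nonempty) →
      (∀ k : ℕ, V' k ⊆ V k ∧ W' k ⊆ W k) →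
      (⋂ k, V k) = ∅ ∨ (⋂ k, W k) = ∅

/-! A strategy for α yields one for α' by playing it on both boards independently. Conversely,
given a strategy for α', player α imagines a tandem game whose `V`-board is the actual play and on
whose `W`-board β' opens with `V₁` and then only repeats the last move of α'; the answers on
the `V`-board then form a winning strategy. -/

section Histories

variable {E : Type*}

theorem bmMove_two_mul (V U : ℕ → Set E) (k : ℕ) : bmMove V U (2 * k) = V k := by
  simp [bmMove]

theorem bmMove_two_mul_add_one (V U : ℕ → Set E) (k : ℕ) :
    bmMove V U (2 * k + 1) = U k := by
  simp [bmMove, Nat.mul_add_div]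

theorem bmMove_interleave (h : ℕ → Set E) :
    bmMove (fun k => h (2 * k)) (fun k => h (2 * k + 1)) = h := by
  funext i
  obtain ⟨k, rfl | rfl⟩ := i.even_or_odd'
  · rw [bmMove_two_mul]
  · rw [bmMove_two_mul_add_one]

theorem bmHist_apply_of_lt (V U : ℕ → Set E) {n i : ℕ} (hi : i < n) :
    bmHist V U n i = bmMove V U i :=
  if_pos hi

theorem bmHist_congr {V₁ V₂ U₁ U₂ : ℕ → Set E} {n : ℕ}
    (hV : ∀ k, 2 * k < n → V₁ k = V₂ k) (hU : ∀ k, 2 * k + 1 < n → U₁ k = U₂ k) :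
    bmHist V₁ U₁ n = bmHist V₂ U₂ n := by
  funext i
  unfold bmHist bmMove
  split_ifs
  exacts [hV _ (by omega), hU _ (by omega), rfl]

section Tandem

variable (V V' W W' : ℕ → Set E) (k : ℕ)

theorem tandemMove_four_mul : tandemMove V V' W W' (4 * k) = V k := by
  simp [tandemMove]

theorem tandemMove_four_mul_add_one : tandemMove V V' W W' (4 * k + 1) = V' k := by
  simp [tandemMove, Nat.mul_add_div]

theorem tandemMove_four_mul_add_two : tandemMove V V' W W' (4 * k + 2) = W k := by
  simp [tandemMove, Nat.mul_add_div]

theorem tandemMove_four_mul_add_three : tandemMove V V' W W' (4 * k + 3) = W' k := by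
  simp [tandemMove, Nat.mul_add_div]

theorem tandemMove_interleave (h : ℕ → Set E) :
    tandemMove (fun k => h (4 * k)) (fun k => h (4 * k + 1)) (fun k => h (4 * k + 2))
      (fun k => h (4 * k + 3)) = h := by
  funext i
  unfold tandemMove
  split_ifs <;> exact congrArg h (by omega)

theorem tandemMove_leftBoard (i : ℕ) :
    tandemMove V V' W W' (4 * (i / 2) + i % 2) = bmMove V V' i := by
  obtain ⟨k, rfl | rfl⟩ := i.even_or_odd'
  · rw [bmMove_two_mul, ← tandemMove_four_mul V V' W W']
    congr 1
    omega
  · rw [bmMove_two_mul_add_one, ← tandemMove_four_mul_add_one V V' W W']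
    congr 1
    omega

theorem tandemMove_rightBoard (i : ℕ) :
    tandemMove V V' W W' (4 * (i / 2) + i % 2 + 2) = bmMove W W' i := by
  obtain ⟨k, rfl | rfl⟩ := i.even_or_odd'
  · rw [bmMove_two_mul, ← tandemMove_four_mul_add_two V V' W W']
    congr 1
    omega
  · rw [bmMove_two_mul_add_one, ← tandemMove_four_mul_add_three V V' W W']
    congr 1
    omega

theorem tandemHist_apply_of_lt {n i : ℕ} (hi : i < n) :
    tandemHist V V' W W' n i = tandemMove V V' W W' i :=
  if_pos hi

end Tandem

theorem tandemHist_congr {V₁ V₁' W₁ W₁' V₂ V₂' W₂ W₂' : ℕ → Set E} {n : ℕ}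
    (hV : ∀ k, 4 * k < n → V₁ k = V₂ k) (hV' : ∀ k, 4 * k + 1 < n → V₁' k = V₂' k)
    (hW : ∀ k, 4 * k + 2 < n → W₁ k = W₂ k) (hW' : ∀ k, 4 * k + 3 < n → W₁' k = W₂' k) :
    tandemHist V₁ V₁' W₁ W₁' n = tandemHist V₂ V₂' W₂ W₂' n := by
  funext i
  unfold tandemHist tandemMove
  split_ifs
  exacts [hV _ (by omega), hV' _ (by omega), hW _ (by omega), hW' _ (by omega), rfl]

end Histories

section Legality

variable {E : Type*} [TopologicalSpace E] {m n k : ℕ}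

section BM

variable {h V U : ℕ → Set E} {σ : ℕ → (ℕ → Set E) → Set E}

theorem BMLegalHist.mono (hh : BMLegalHist n h) (hmn : m ≤ n) : BMLegalHist m h :=
  ⟨fun i hi => hh.1 i (hi.trans_le hmn), fun i j hij hj => hh.2 i j hij (hj.trans_le hmn)⟩

theorem BMLegalHist.succ (hh : BMLegalHist (n + 1) h) (hopen : IsOpen (h (n + 1)))
    (hne : (h (n + 1)).Nonempty) (hsub : h (n + 1) ⊆ h n) : BMLegalHist (n + 2) h := by
  refine ⟨fun i hi => ?_, fun i j hij hj => ?_⟩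
  · rcases Nat.lt_succ_iff_lt_or_eq.1 hi with hi | rfl
    exacts [hh.1 i hi, ⟨hopen, hne⟩]
  · rcases Nat.lt_succ_iff_lt_or_eq.1 hj with hj | rfl
    · exact hh.2 i j hij hj
    · rcases Nat.lt_succ_iff_lt_or_eq.1 hij with hi | rfl
      exacts [hsub.trans (hh.2 i n hi n.lt_succ_self), hsub]

theorem bmLegalHist_bmMove_one (hV : IsOpen (V 0) ∧ (V 0).Nonempty) :
    BMLegalHist 1 (bmMove V U) := by
  refine ⟨fun i hi => ?_, fun i j _ _ => by omega⟩
  rwa [Nat.lt_one_iff.1 hi, ← mul_zero 2, bmMove_two_mul]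

theorem BMLegalHist.bmMove_next_round (hh : BMLegalHist (2 * k + 1) (bmMove V U))
    (hU : IsOpen (U k) ∧ (U k).Nonempty ∧ U k ⊆ V k)
    (hV : IsOpen (V (k + 1)) ∧ (V (k + 1)).Nonempty ∧ V (k + 1) ⊆ U k) :
    BMLegalHist (2 * (k + 1) + 1) (bmMove V U) := by
  rw [← bmMove_two_mul V U (k + 1), ← bmMove_two_mul_add_one V U k] at hV
  rw [← bmMove_two_mul V U k, ← bmMove_two_mul_add_one V U k] at hU
  exact (hh.succ hU.1 hU.2.1 hU.2.2).succ hV.1 hV.2.1 hV.2.2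

theorem BMLegalHist.bmHist (hh : BMLegalHist n (bmMove V U)) : BMLegalHist n (bmHist V U n) := by
  refine ⟨fun i hi => ?_, fun i j hij hj => ?_⟩
  · rw [bmHist_apply_of_lt V U hi]
    exact hh.1 i hi
  · rw [bmHist_apply_of_lt V U hj, bmHist_apply_of_lt V U (hij.trans hj)]
    exact hh.2 i j hij hj

theorem IsBMAlphaStrat.legal_reply (hσ : IsBMAlphaStrat σ)
    (hh : BMLegalHist (2 * k + 1) (bmMove V U)) :
    IsOpen (σ (2 * k + 1) (bmHist V U (2 * k + 1))) ∧
      (σ (2 * k + 1) (bmHist V U (2 * k + 1))).Nonempty ∧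
      σ (2 * k + 1) (bmHist V U (2 * k + 1)) ⊆ V k := by
  simpa [bmHist_apply_of_lt, bmMove_two_mul] using hσ _ _ hh.bmHist (by omega)

theorem IsBMAlphaStrat.bmLegalHist (hσ : IsBMAlphaStrat σ) (hfol : BMFollowsAlpha σ V U)
    (hV : ∀ k, IsOpen (V k) ∧ (V k).Nonempty) (hVU : ∀ k, V (k + 1) ⊆ U k) (k : ℕ) :
    BMLegalHist (2 * k + 1) (bmMove V U) := by
  induction k with
  | zero => exact bmLegalHist_bmMove_one (hV 0)
  | succ k ih =>
    have hU := hσ.legal_reply ih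
    rw [← hfol k] at hU
    exact ih.bmMove_next_round hU ⟨(hV _).1, (hV _).2, hVU k⟩

theorem BMAlphaWinning.iInter_nonempty (hσ : BMAlphaWinning σ) (hfol : BMFollowsAlpha σ V U)
    (hV : ∀ k, IsOpen (V k) ∧ (V k).Nonempty) (hVU : ∀ k, V (k + 1) ⊆ U k) :
    (⋂ k, V k).Nonempty := by
  have hUV (k : ℕ) : U k ⊆ V k := by
    rw [hfol k]
    exact (hσ.1.legal_reply (hσ.1.bmLegalHist hfol hV hVU k)).2.2
  exact (hσ.2 V U hfol (hV 0) fun k => ⟨(hV _).1, (hV _).2, hVU k⟩).mono (Set.iInter_mono hUV)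

end BM

section Tandem

variable {h V V' W W' : ℕ → Set E} {τ : ℕ → (ℕ → Set E) → Set E}

theorem tandemLegalHist_tandemMove_iff :
    TandemLegalHist n (tandemMove V V' W W') ↔
      BMLegalHist (2 * (n / 4) + min (n % 4) 2) (bmMove V V') ∧
        BMLegalHist (2 * (n / 4) + (n % 4 - 2)) (bmMove W W') := by
  simp only [BMLegalHist, ← tandemMove_leftBoard V V' W W', ← tandemMove_rightBoard V V' W W']
  refine ⟨fun hh => ⟨⟨fun i hi => hh.1 _ (by omega), fun i j hij hj =>
      hh.2.1 _ _ (by omega) (by omega) (by omega) (by omega)⟩,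
    fun i hi => hh.1 _ (by omega), fun i j hij hj =>
      hh.2.2 _ _ (by omega) (by omega) (by omega) (by omega)⟩, ?_⟩
  rintro ⟨⟨hV, hVV⟩, hW, hWW⟩
  have left (i : ℕ) (hi : i % 4 < 2) : ∃ j, i = 4 * (j / 2) + j % 2 :=
    ⟨2 * (i / 4) + i % 2, by omega⟩
  have right (i : ℕ) (hi : 2 ≤ i % 4) : ∃ j, i = 4 * (j / 2) + j % 2 + 2 :=
    ⟨2 * (i / 4) + i % 2, by omega⟩
  refine ⟨fun i hi => ?_, fun i j hij hj hi4 hj4 => ?_, fun i j hij hj hi4 hj4 => ?_⟩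
  · rcases lt_or_ge (i % 4) 2 with hi4 | hi4
    · obtain ⟨a, rfl⟩ := left i hi4
      exact hV a (by omega)
    · obtain ⟨a, rfl⟩ := right i hi4
      exact hW a (by omega)
  · obtain ⟨a, rfl⟩ := left i hi4
    obtain ⟨b, rfl⟩ := left j hj4
    exact hVV a b (by omega) (by omega)
  · obtain ⟨a, rfl⟩ := right i hi4
    obtain ⟨b, rfl⟩ := right j hj4
    exact hWW a b (by omega) (by omega)

theorem tandemLegalHist_four_mul_add_one_iff :
    TandemLegalHist (4 * k + 1) (tandemMove V V' W W') ↔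
      BMLegalHist (2 * k + 1) (bmMove V V') ∧ BMLegalHist (2 * k) (bmMove W W') := by
  simp [tandemLegalHist_tandemMove_iff, Nat.mul_add_div]

theorem tandemLegalHist_four_mul_add_three_iff :
    TandemLegalHist (4 * k + 3) (tandemMove V V' W W') ↔
      BMLegalHist (2 * k + 2) (bmMove V V') ∧ BMLegalHist (2 * k + 1) (bmMove W W') := by
  simp [tandemLegalHist_tandemMove_iff, Nat.mul_add_div]

theorem TandemLegalHist.tandemHist (hh : TandemLegalHist n (tandemMove V V' W W')) :
    TandemLegalHist n (tandemHist V V' W W' n) := by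
  refine ⟨fun i hi => ?_, fun i j hij hj => ?_, fun i j hij hj => ?_⟩
  · rw [tandemHist_apply_of_lt _ _ _ _ hi]
    exact hh.1 i hi
  · rw [tandemHist_apply_of_lt _ _ _ _ hj, tandemHist_apply_of_lt _ _ _ _ (hij.trans hj)]
    exact hh.2.1 i j hij hj
  · rw [tandemHist_apply_of_lt _ _ _ _ hj, tandemHist_apply_of_lt _ _ _ _ (hij.trans hj)]
    exact hh.2.2 i j hij hj

theorem IsTandemAlphaStrat.legal_reply_left (hτ : IsTandemAlphaStrat τ)
    (hV : BMLegalHist (2 * k + 1) (bmMove V V')) (hW : BMLegalHist (2 * k) (bmMove W W')) :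
    IsOpen (τ (4 * k + 1) (tandemHist V V' W W' (4 * k + 1))) ∧
      (τ (4 * k + 1) (tandemHist V V' W W' (4 * k + 1))).Nonempty ∧
      τ (4 * k + 1) (tandemHist V V' W W' (4 * k + 1)) ⊆ V k := by
  simpa [tandemHist_apply_of_lt, tandemMove_four_mul] using
    hτ _ _ (tandemLegalHist_four_mul_add_one_iff.2 ⟨hV, hW⟩).tandemHist (by omega)

theorem IsTandemAlphaStrat.legal_reply_right (hτ : IsTandemAlphaStrat τ)
    (hV : BMLegalHist (2 * k + 2) (bmMove V V')) (hW : BMLegalHist (2 * k + 1) (bmMove W W')) :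
    IsOpen (τ (4 * k + 3) (tandemHist V V' W W' (4 * k + 3))) ∧
      (τ (4 * k + 3) (tandemHist V V' W W' (4 * k + 3))).Nonempty ∧
      τ (4 * k + 3) (tandemHist V V' W W' (4 * k + 3)) ⊆ W k := by
  simpa [tandemHist_apply_of_lt, tandemMove_four_mul_add_two] using
    hτ _ _ (tandemLegalHist_four_mul_add_three_iff.2 ⟨hV, hW⟩).tandemHist (by omega)

end Tandem

end Legality

section TandemOfBM

variable {E : Type*} {σ : ℕ → (ℕ → Set E) → Set E}

/-- The strategy for α' that plays the strategy `σ` for α on each board separately. Only odd `n`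
matter: the `V`-board is to move if `n % 4 = 1` and the `W`-board if `n % 4 = 3`. -/
def tandemOfBM (σ : ℕ → (ℕ → Set E) → Set E) (n : ℕ) (h : ℕ → Set E) : Set E :=
  if n % 4 = 1 then
    σ (2 * (n / 4) + 1) (bmHist (fun k => h (4 * k)) (fun k => h (4 * k + 1)) (2 * (n / 4) + 1))
  else
    σ (2 * (n / 4) + 1)
      (bmHist (fun k => h (4 * k + 2)) (fun k => h (4 * k + 3)) (2 * (n / 4) + 1))

theorem tandemOfBM_four_mul_add_one (h : ℕ → Set E) (k : ℕ) :
    tandemOfBM σ (4 * k + 1) h =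
      σ (2 * k + 1) (bmHist (fun j => h (4 * j)) (fun j => h (4 * j + 1)) (2 * k + 1)) := by
  simp [tandemOfBM, Nat.mul_add_div]

theorem tandemOfBM_four_mul_add_three (h : ℕ → Set E) (k : ℕ) :
    tandemOfBM σ (4 * k + 3) h =
      σ (2 * k + 1) (bmHist (fun j => h (4 * j + 2)) (fun j => h (4 * j + 3)) (2 * k + 1)) := by
  simp [tandemOfBM, Nat.mul_add_div]

theorem TandemFollowsAlpha.left_of_tandemOfBM {V V' W W' : ℕ → Set E}
    (hfol : TandemFollowsAlpha (tandemOfBM σ) V V' W W') : BMFollowsAlpha σ V V' := by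
  intro k
  rw [(hfol k).1, tandemOfBM_four_mul_add_one]
  refine congrArg (σ _) (bmHist_congr (fun j hj => ?_) fun j hj => ?_)
  · rw [tandemHist_apply_of_lt _ _ _ _ (by omega), tandemMove_four_mul]
  · rw [tandemHist_apply_of_lt _ _ _ _ (by omega), tandemMove_four_mul_add_one]

theorem TandemFollowsAlpha.right_of_tandemOfBM {V V' W W' : ℕ → Set E}
    (hfol : TandemFollowsAlpha (tandemOfBM σ) V V' W W') : BMFollowsAlpha σ W W' := by
  intro k
  rw [(hfol k).2, tandemOfBM_four_mul_add_three]
  refine congrArg (σ _) (bmHist_congr (fun j hj => ?_) fun j hj => ?_)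
  · rw [tandemHist_apply_of_lt _ _ _ _ (by omega), tandemMove_four_mul_add_two]
  · rw [tandemHist_apply_of_lt _ _ _ _ (by omega), tandemMove_four_mul_add_three]

variable [TopologicalSpace E]

theorem IsBMAlphaStrat.tandemOfBM (hσ : IsBMAlphaStrat σ) :
    IsTandemAlphaStrat (tandemOfBM σ) := by
  intro n h hh hn
  rw [← tandemMove_interleave h] at hh
  obtain ⟨k, rfl | rfl⟩ : ∃ k, n = 4 * k + 1 ∨ n = 4 * k + 3 := ⟨n / 4, by omega⟩
  · rw [tandemOfBM_four_mul_add_one]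
    exact hσ.legal_reply (tandemLegalHist_four_mul_add_one_iff.1 hh).1
  · rw [tandemOfBM_four_mul_add_three]
    exact hσ.legal_reply (tandemLegalHist_four_mul_add_three_iff.1 hh).2

theorem BMAlphaWinning.tandemOfBM (hσ : BMAlphaWinning σ) :
    TandemAlphaWinning (tandemOfBM σ) :=
  ⟨hσ.1.tandemOfBM, fun _ _ _ _ hfol hopen hsub =>
    ⟨hσ.iInter_nonempty hfol.left_of_tandemOfBM (fun k => ⟨(hopen k).1, (hopen k).2.1⟩)
      fun k => (hsub k).1,
    hσ.iInter_nonempty hfol.right_of_tandemOfBM (fun k => (hopen k).2.2) fun k => (hsub k).2⟩⟩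

end TandemOfBM

section BMOfTandem

variable {E : Type*}

/-- The moves `R 0 ⊇ R 1 ⊇ …` on the `W`-board when the moves on the `V`-board are `V` and `V'`,
α' follows `τ` and β' opens the `W`-board with `V 0` and then repeats the last move of α'
there: the `W`-board is then `R 0, R 1, R 1, R 2, R 2, …`, that is, `W k = R k` and
`W' k = R (k + 1)`. -/
def passivePlay (τ : ℕ → (ℕ → Set E) → Set E) (V V' : ℕ → Set E) : ℕ → Set E
  | 0 => V 0
  | k + 1 =>
    let past : ℕ → Set E := fun j => if j < k + 1 then passivePlay τ V V' j else ∅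
    τ (4 * k + 3) (tandemHist V V' past (fun j => past (j + 1)) (4 * k + 3))

/-- The history of the first `n` moves of the tandem play whose `W`-board is `passivePlay`. -/
def passiveHist (τ : ℕ → (ℕ → Set E) → Set E) (V V' : ℕ → Set E) (n : ℕ) : ℕ → Set E :=
  tandemHist V V' (passivePlay τ V V') (fun k => passivePlay τ V V' (k + 1)) n

/-- The strategy for α that answers as `τ` does on the `V`-board of the tandem play in which β'
is passive on the `W`-board: the move with index `2 * k + 1` of the Banach–Mazur game is the one
with index `4 * k + 1` of the tandem game. Only odd `n` matter. -/
def bmOfTandem (τ : ℕ → (ℕ → Set E) → Set E) (n : ℕ) (h : ℕ → Set E) : Set E :=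
  τ (4 * (n / 2) + 1)
    (passiveHist τ (fun k => h (2 * k)) (fun k => h (2 * k + 1)) (4 * (n / 2) + 1))

variable {τ : ℕ → (ℕ → Set E) → Set E}

theorem passivePlay_zero (V V' : ℕ → Set E) : passivePlay τ V V' 0 = V 0 := by
  rw [passivePlay]

theorem passivePlay_succ (V V' : ℕ → Set E) (k : ℕ) :
    passivePlay τ V V' (k + 1) = τ (4 * k + 3) (passiveHist τ V V' (4 * k + 3)) := by
  rw [passivePlay]
  exact congrArg (τ _) (tandemHist_congr (fun _ _ => rfl) (fun _ _ => rfl)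
    (fun j hj => if_pos (by omega)) fun j hj => if_pos (by omega))

theorem passivePlay_congr {V₁ V₁' V₂ V₂' : ℕ → Set E} {k : ℕ}
    (hV : ∀ i ≤ k, V₁ i = V₂ i) (hV' : ∀ i < k, V₁' i = V₂' i) :
    passivePlay τ V₁ V₁' k = passivePlay τ V₂ V₂' k := by
  induction k using Nat.strong_induction_on with
  | _ k ih =>
    cases k with
    | zero => rw [passivePlay_zero, passivePlay_zero, hV 0 le_rfl]
    | succ k =>
      have past (j : ℕ) (hj : j < k + 1) : passivePlay τ V₁ V₁' j = passivePlay τ V₂ V₂' j :=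
        ih j hj (fun i hi => hV i (by omega)) fun i hi => hV' i (by omega)
      rw [passivePlay_succ, passivePlay_succ]
      exact congrArg (τ _) (tandemHist_congr (fun j hj => hV j (by omega))
        (fun j hj => hV' j (by omega)) (fun j hj => past j (by omega))
        fun j hj => past (j + 1) (by omega))

theorem passiveHist_four_mul_add_one_congr {V₁ V₁' V₂ V₂' : ℕ → Set E} {k : ℕ}
    (hV : ∀ i ≤ k, V₁ i = V₂ i) (hV' : ∀ i < k, V₁' i = V₂' i) :
    passiveHist τ V₁ V₁' (4 * k + 1) = passiveHist τ V₂ V₂' (4 * k + 1) := by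
  have past (j : ℕ) (hj : j ≤ k) : passivePlay τ V₁ V₁' j = passivePlay τ V₂ V₂' j :=
    passivePlay_congr (fun i hi => hV i (hi.trans hj)) fun i hi => hV' i (hi.trans_le hj)
  exact tandemHist_congr (fun j hj => hV j (by omega)) (fun j hj => hV' j (by omega))
    (fun j hj => past j (by omega)) fun j hj => past (j + 1) (by omega)

theorem bmOfTandem_two_mul_add_one (h : ℕ → Set E) (k : ℕ) :
    bmOfTandem τ (2 * k + 1) h =
      τ (4 * k + 1) (passiveHist τ (fun j => h (2 * j)) (fun j => h (2 * j + 1)) (4 * k + 1)) := by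
  simp [bmOfTandem, Nat.mul_add_div]

theorem bmOfTandem_bmHist (V U : ℕ → Set E) (k : ℕ) :
    bmOfTandem τ (2 * k + 1) (bmHist V U (2 * k + 1)) =
      τ (4 * k + 1) (passiveHist τ V U (4 * k + 1)) := by
  rw [bmOfTandem_two_mul_add_one]
  refine congrArg (τ _) (passiveHist_four_mul_add_one_congr (fun j hj => ?_) fun j hj => ?_)
  · rw [bmHist_apply_of_lt V U (by omega), bmMove_two_mul]
  · rw [bmHist_apply_of_lt V U (by omega), bmMove_two_mul_add_one]

theorem BMFollowsAlpha.tandemFollowsAlpha {V U : ℕ → Set E}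
    (hfol : BMFollowsAlpha (bmOfTandem τ) V U) :
    TandemFollowsAlpha τ V U (passivePlay τ V U) (fun k => passivePlay τ V U (k + 1)) :=
  fun k => ⟨(hfol k).trans (bmOfTandem_bmHist V U k), passivePlay_succ V U k⟩

variable [TopologicalSpace E]

theorem IsTandemAlphaStrat.bmLegalHist_passivePlay (hτ : IsTandemAlphaStrat τ)
    {V V' : ℕ → Set E} {k : ℕ} (hV : BMLegalHist (2 * k + 1) (bmMove V V')) :
    BMLegalHist (2 * k + 1)
      (bmMove (passivePlay τ V V') (fun j => passivePlay τ V V' (j + 1))) := by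
  induction k with
  | zero =>
    refine bmLegalHist_bmMove_one ?_
    rw [passivePlay_zero, ← bmMove_two_mul V V']
    exact hV.1 0 Nat.one_pos
  | succ k ih =>
    have hW := ih (hV.mono (by omega))
    have hreply := hτ.legal_reply_right (hV.mono (by omega)) hW
    rw [← passiveHist, ← passivePlay_succ (τ := τ)] at hreply
    exact hW.bmMove_next_round hreply ⟨hreply.1, hreply.2.1, subset_rfl⟩

theorem IsTandemAlphaStrat.bmOfTandem (hτ : IsTandemAlphaStrat τ) :
    IsBMAlphaStrat (bmOfTandem τ) := by
  intro n h hh hn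
  obtain ⟨k, rfl⟩ := Nat.odd_iff.2 hn
  rw [← bmMove_interleave h] at hh
  rw [bmOfTandem_two_mul_add_one]
  exact hτ.legal_reply_left hh ((hτ.bmLegalHist_passivePlay hh).mono (by omega))

theorem TandemAlphaWinning.bmOfTandem (hτ : TandemAlphaWinning τ) :
    BMAlphaWinning (bmOfTandem τ) := by
  refine ⟨hτ.1.bmOfTandem, fun V U hfol hV₀ hV => ?_⟩
  have hVopen : ∀ k, IsOpen (V k) ∧ (V k).Nonempty
    | 0 => hV₀
    | k + 1 => ⟨(hV k).1, (hV k).2.1⟩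
  have hWopen (k : ℕ) : IsOpen (passivePlay τ V U k) ∧ (passivePlay τ V U k).Nonempty := by
    have hVlegal := hτ.1.bmOfTandem.bmLegalHist hfol hVopen (fun j => (hV j).2.2) k
    simpa only [bmMove_two_mul] using
      (hτ.1.bmLegalHist_passivePlay hVlegal).1 (2 * k) (2 * k).lt_succ_self
  have hVne : (⋂ k, V k).Nonempty :=
    (hτ.2 V U _ _ hfol.tandemFollowsAlpha
      (fun k => ⟨(hVopen k).1, (hVopen k).2, hWopen k⟩)
      fun k => ⟨(hV k).2.2, subset_rfl⟩).1
  exact hVne.mono (Set.subset_iInter fun k => (Set.iInter_subset V (k + 1)).trans (hV k).2.2)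

end BMOfTandem

/-- Player α has a winning strategy in the Banach–Mazur game on `E` if and only if
player α' has a winning strategy in the tandem Banach–Mazur game on `E`. -/
theorem bm_alpha_winning_iff_tandem_alpha_winning (E : Type u) [TopologicalSpace E] :
    (∃ σ : ℕ → (ℕ → Set E) → Set E, BMAlphaWinning σ) ↔
      ∃ σ : ℕ → (ℕ → Set E) → Set E, TandemAlphaWinning σ :=
  ⟨fun ⟨σ, hσ⟩ => ⟨tandemOfBM σ, hσ.tandemOfBM⟩, fun ⟨τ, hτ⟩ => ⟨bmOfTandem τ, hτ.bmOfTandem⟩⟩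
end

section
/- Every semi-regular Hausdorff space E which is τ*-Baire is a B_r-space; that is, every continuous nearly open bijection f from E onto an arbitrary Hausdorff space F is open. -/
universe u v w

/-- A map between topological spaces is *nearly open* if the image of every open set is
contained in the interior of the closure of that image. -/
def NearlyOpen {X Y : Type*} [TopologicalSpace X] [TopologicalSpace Y] (f : X → Y) : Prop :=
  ∀ U : Set X, IsOpen U → f '' U ⊆ interior (closure (f '' U))

/-- A topological space is *semi-regular* if the regular-open sets
(sets `V` with `V = interior (closure V)`) form a base of the topology. -/
def SemiRegular (E : Type*) [TopologicalSpace E] : Prop :=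
  ∀ (U : Set E) (x : E), IsOpen U → x ∈ U →
    ∃ V : Set E, V = interior (closure V) ∧ x ∈ V ∧ V ⊆ U

/-- A space is *τ*-Baire* if for every strategy of player β' in the tandem
Banach–Mazur game there is a strategy of player α' which beats it *strongly*:
in their play, every (proper) filter containing all the sets `V k` has a cluster point
in `⋂ k, V k`, and every filter containing all the sets `W k` has a cluster point in
`⋂ k, W k`. -/
def TauStarBaire (E : Type*) [TopologicalSpace E] : Prop :=
  ∀ σβ : ℕ → (ℕ → Set E) → Set E, IsTandemBetaStrat σβ →
    ∃ σα : ℕ → (ℕ → Set E) → Set E, IsTandemAlphaStrat σα ∧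
      ∀ V V' W W' : ℕ → Set E,
        TandemFollowsBeta σβ V V' W W' → TandemFollowsAlpha σα V V' W W' →
        (∀ F : Filter E, F.NeBot → (∀ k, V k ∈ F) → ∃ x ∈ (⋂ k, V k), ClusterPt x F) ∧
        (∀ F : Filter E, F.NeBot → (∀ k, W k ∈ F) → ∃ x ∈ (⋂ k, W k), ClusterPt x F)

/-- A Hausdorff space `E` is a *B_r-space* if every continuous nearly open bijection
from `E` onto an arbitrary Hausdorff space is open. -/
def IsBrSpace.{u', v'} (E : Type u') [TopologicalSpace E] [T2Space E] : Prop :=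
  ∀ (F : Type v') [TopologicalSpace F] [T2Space F],
    ∀ f : E → F, Continuous f → NearlyOpen f → Function.Bijective f → IsOpenMap f

/-!
Suppose that `A` and `B` are open, `A` is nonempty and `f '' A ⊆ closure (f '' B)`. Let β' start
with `A` on one board and move inside `B` on the other, and let each later move be cut down to
points whose images are close to the image of the last move on the other board; near openness
keeps this possible forever. Against an α' that wins strongly, some `x` lies in all the `Vₖ`, and
then `f x` lies in the closure of the image of every `Wₖ`. The cluster points of the filters on
the `W`-board, together with injectivity and the Hausdorff property of the target, put `x` in all
the `Wₖ` as well. Hence `A ∩ B` is nonempty. It follows that every regular-open `U` is the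
preimage of the interior of the closure of its image, so that `f` maps a base to open sets.
-/

open Set Filter Topology TopologicalSpace

section NearHull

variable {X Y : Type*} [TopologicalSpace Y] {f : X → Y}

/-- The points which `f` sends into the interior of the closure of `f '' S`. When `f` is nearly
open, this set contains every open `S`. -/
def nearHull (f : X → Y) (S : Set X) : Set X :=
  f ⁻¹' interior (closure (f '' S))

lemma image_nearHull_subset (f : X → Y) (S : Set X) : f '' nearHull f S ⊆ closure (f '' S) :=
  (image_preimage_subset f _).trans interior_subset

variable [TopologicalSpace X]

lemma isOpen_nearHull (hc : Continuous f) (S : Set X) : IsOpen (nearHull f S) :=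
  isOpen_interior.preimage hc

lemma NearlyOpen.subset_nearHull (hf : NearlyOpen f) {S : Set X} (hS : IsOpen S) :
    S ⊆ nearHull f S :=
  image_subset_iff.1 (hf S hS)

lemma NearlyOpen.inter_nearHull_nonempty (hf : NearlyOpen f) {S T : Set X} (hS : IsOpen S)
    (hne : S.Nonempty) (hST : f '' S ⊆ closure (f '' T)) : (T ∩ nearHull f S).Nonempty := by
  obtain ⟨s, hs⟩ := hne
  obtain ⟨_, hy, t, ht, rfl⟩ := mem_closure_iff.1 (hST (mem_image_of_mem f hs)) _
    isOpen_interior (hf.subset_nearHull hS hs)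
  exact ⟨t, ht, hy⟩

lemma nearHull_subset_closure (hc : Continuous f) {U : Set X}
    (hU : ∀ A : Set X, IsOpen A → A.Nonempty → f '' A ⊆ closure (f '' U) → (A ∩ U).Nonempty) :
    nearHull f U ⊆ closure U := by
  intro x hx
  rw [mem_closure_iff]
  intro O hO hxO
  have himage : f '' (O ∩ nearHull f U) ⊆ closure (f '' U) :=
    (image_mono inter_subset_right).trans (image_nearHull_subset f U)
  exact (hU _ (hO.inter (isOpen_nearHull hc U)) ⟨x, hxO, hx⟩ himage).mono
    (inter_subset_inter_left _ inter_subset_left)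

lemma SemiRegular.isTopologicalBasis (hX : SemiRegular X) :
    IsTopologicalBasis {V : Set X | V = interior (closure V)} :=
  isTopologicalBasis_of_isOpen_of_nhds (fun _ hV => hV ▸ isOpen_interior) fun x U hx hU =>
    hX U x hU hx

lemma NearlyOpen.isOpenMap_of_semiRegular (hf : NearlyOpen f) (hX : SemiRegular X)
    (hc : Continuous f) (hsurj : Function.Surjective f)
    (hmeet : ∀ A B : Set X, IsOpen A → IsOpen B → A.Nonempty →
      f '' A ⊆ closure (f '' B) → (A ∩ B).Nonempty) : IsOpenMap f := by
  rw [hX.isTopologicalBasis.isOpenMap_iff]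
  intro U hU
  have hUo : IsOpen U := hU ▸ isOpen_interior
  have hclosure : nearHull f U ⊆ closure U :=
    nearHull_subset_closure hc fun A hA hne => hmeet A U hA hUo hne
  have hhull : nearHull f U ⊆ U :=
    (interior_maximal hclosure (isOpen_nearHull hc U)).trans hU.ge
  rw [(hf.subset_nearHull hUo).antisymm hhull, nearHull, image_preimage_eq _ hsurj]
  exact isOpen_interior

end NearHull

section FiltersCluster

variable {ι κ : Sort*} {X Y : Type*} [TopologicalSpace X] [TopologicalSpace Y]

/-- The winning condition of α' on one board, for an arbitrary family of sets: every proper filter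
containing all of them has a cluster point in their intersection. -/
def FiltersCluster (V : ι → Set X) : Prop :=
  ∀ F : Filter X, F.NeBot → (∀ i, V i ∈ F) → ∃ x ∈ ⋂ i, V i, ClusterPt x F

variable [Nonempty ι] [Nonempty κ] {V : κ → Set X} {W : ι → Set X}

lemma FiltersCluster.exists_clusterPt (hW : FiltersCluster W) (hdir : Directed (· ⊇ ·) W)
    {l : Filter X} (hl : ∀ i, (l ⊓ 𝓟 (W i)).NeBot) : ∃ x ∈ ⋂ i, W i, ClusterPt x l := by
  have hdir' : Directed (· ≥ ·) fun i => l ⊓ 𝓟 (W i) :=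
    Directed.mono_comp (g := fun S => l ⊓ 𝓟 S) (· ⊇ ·)
      (fun _ _ h => inf_le_inf_left l (principal_mono.2 h)) hdir
  have hne : (⨅ i, l ⊓ 𝓟 (W i)).NeBot := iInf_neBot_of_directed' hdir' hl
  obtain ⟨x, hx, hcluster⟩ := hW _ hne fun i =>
    mem_iInf_of_mem i (mem_inf_of_right (mem_principal_self _))
  exact ⟨x, hx, hcluster.mono (iInf_le_of_le (Classical.arbitrary ι) inf_le_left)⟩

lemma FiltersCluster.iInter_nonempty (hW : FiltersCluster W) (hdir : Directed (· ⊇ ·) W)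
    (hne : ∀ i, (W i).Nonempty) : (⋂ i, W i).Nonempty := by
  obtain ⟨x, hx, -⟩ := hW.exists_clusterPt hdir (l := ⊤) fun i => by
    rw [top_inf_eq]
    exact principal_neBot_iff.2 (hne i)
  exact ⟨x, hx⟩

variable [T2Space Y] {f : X → Y}

lemma FiltersCluster.iInter_closure_image_subset (hW : FiltersCluster W)
    (hdir : Directed (· ⊇ ·) W) (hc : Continuous f) :
    ⋂ i, closure (f '' W i) ⊆ f '' ⋂ i, W i := by
  intro y hy
  have hne (i : ι) : (comap f (𝓝 y) ⊓ 𝓟 (W i)).NeBot := by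
    rw [neBot_inf_comap_iff_map', map_principal]
    exact mem_closure_iff_clusterPt.1 (mem_iInter.1 hy i)
  obtain ⟨x, hx, hcluster⟩ := hW.exists_clusterPt hdir hne
  have hlim : ClusterPt (f x) (𝓝 y) := hcluster.map hc.continuousAt tendsto_comap
  exact ⟨x, hx, eq_of_nhds_neBot hlim⟩

lemma FiltersCluster.iInter_inter_iInter_nonempty (hV : FiltersCluster V) (hW : FiltersCluster W)
    (hVdir : Directed (· ⊇ ·) V) (hWdir : Directed (· ⊇ ·) W) (hne : ∀ j, (V j).Nonempty)
    (hc : Continuous f) (hinj : Function.Injective f)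
    (hVW : ∀ i, ∃ j, f '' V j ⊆ closure (f '' W i)) :
    ((⋂ j, V j) ∩ ⋂ i, W i).Nonempty := by
  obtain ⟨x, hx⟩ := hV.iInter_nonempty hVdir hne
  have hfx : f x ∈ ⋂ i, closure (f '' W i) := mem_iInter.2 fun i => by
    obtain ⟨j, hj⟩ := hVW i
    exact hj (mem_image_of_mem f (mem_iInter.1 hx j))
  exact ⟨x, hx, (hinj.mem_set_image).1 (hW.iInter_closure_image_subset hWdir hc hfx)⟩

end FiltersCluster

section Play

variable {E : Type*}

/-- The history of the first `n` moves of a play recorded as a single sequence, with the encoding of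
`tandemHist`: the value is `∅` from index `n` onwards. -/
def pastMoves (m : ℕ → Set E) (n : ℕ) : ℕ → Set E :=
  fun i => if i < n then m i else ∅

lemma pastMoves_of_lt (m : ℕ → Set E) {i n : ℕ} (h : i < n) : pastMoves m n i = m i :=
  if_pos h

lemma exists_eq_pastMoves (σ : ℕ → (ℕ → Set E) → Set E) :
    ∃ m : ℕ → Set E, ∀ n, m n = σ n (pastMoves m n) :=
  ⟨Nat.lt_wfRel.wf.fix fun n past => σ n fun i => if h : i < n then past i h else ∅,
    fun n => Nat.lt_wfRel.wf.fix_eq _ n⟩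

lemma tandemHist_eq_pastMoves (m : ℕ → Set E) (n : ℕ) :
    tandemHist (fun k => m (4 * k)) (fun k => m (4 * k + 1)) (fun k => m (4 * k + 2))
      (fun k => m (4 * k + 3)) n = pastMoves m n := by
  funext i
  unfold tandemHist tandemMove pastMoves
  split_ifs <;> first | rfl | exact congrArg m (by omega)

variable [TopologicalSpace E] {σ σβ σα : ℕ → (ℕ → Set E) → Set E} {m : ℕ → Set E} {n : ℕ}

lemma TandemLegalHist.subset (hm : TandemLegalHist n m) {i j : ℕ} (hij : i ≤ j) (hj : j < n)
    (hboard : i % 4 < 2 ↔ j % 4 < 2) : m j ⊆ m i := by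
  rcases hij.eq_or_lt with rfl | hlt
  · exact Subset.rfl
  by_cases hi : i % 4 < 2
  · exact hm.2.1 i j hlt hj hi (hboard.1 hi)
  · exact hm.2.2 i j hlt hj (by omega) (by omega)

lemma TandemLegalHist.succ (hm : TandemLegalHist n m) (ho : IsOpen (m n)) (hne : (m n).Nonempty)
    (hsub : ∀ i < n, (i % 4 < 2 ↔ n % 4 < 2) → m n ⊆ m i) : TandemLegalHist (n + 1) m := by
  have hnested {i j : ℕ} (hij : i < j) (hj : j < n + 1) (hboard : i % 4 < 2 ↔ j % 4 < 2) :
      m j ⊆ m i := by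
    rcases (Nat.lt_succ_iff.1 hj).eq_or_lt with rfl | hlt
    · exact hsub i hij hboard
    · exact hm.subset hij.le hlt hboard
  refine ⟨fun i hi => ?_, fun i j hij hj _ _ => hnested hij hj (by omega),
    fun i j hij hj _ _ => hnested hij hj (by omega)⟩
  rcases (Nat.lt_succ_iff.1 hi).eq_or_lt with rfl | hlt
  · exact ⟨ho, hne⟩
  · exact hm.1 i hlt

lemma tandemLegalHist_pastMoves (hm : TandemLegalHist n m) :
    TandemLegalHist n (pastMoves m n) := by
  have heq {i : ℕ} (hi : i < n) : pastMoves m n i = m i := pastMoves_of_lt m hi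
  refine ⟨fun i hi => ?_, fun i j hij hj hi₂ hj₂ => ?_, fun i j hij hj hi₂ hj₂ => ?_⟩
  · rw [heq hi]
    exact hm.1 i hi
  · rw [heq hj, heq (hij.trans hj)]
    exact hm.2.1 i j hij hj hi₂ hj₂
  · rw [heq hj, heq (hij.trans hj)]
    exact hm.2.2 i j hij hj hi₂ hj₂

lemma tandemLegalHist_of_follows (hβ : IsTandemBetaStrat σβ) (hα : IsTandemAlphaStrat σα)
    (heven : ∀ n, n % 2 = 0 → m n = σβ n (pastMoves m n))
    (hodd : ∀ n, n % 2 = 1 → m n = σα n (pastMoves m n)) (n : ℕ) : TandemLegalHist n m := by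
  induction n with
  | zero => simp [TandemLegalHist]
  | succ n ih =>
    rcases Nat.mod_two_eq_zero_or_one n with hn | hn
    · obtain ⟨ho, hne, hsub⟩ := hβ n _ (tandemLegalHist_pastMoves ih) hn
      rw [← heven n hn] at ho hne hsub
      refine ih.succ ho hne fun i hi hboard => (hsub (by omega)).trans ?_
      rw [pastMoves_of_lt m (by omega)]
      exact ih.subset (by omega) (by omega) (by omega)
    · obtain ⟨ho, hne, hsub⟩ := hα n _ (tandemLegalHist_pastMoves ih) hn
      rw [← hodd n hn] at ho hne hsub
      refine ih.succ ho hne fun i hi hboard => hsub.trans ?_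
      rw [pastMoves_of_lt m (by omega)]
      exact ih.subset (by omega) (by omega) (by omega)

/-- An infinite legal play of the tandem game in which β' follows the strategy `σ`. The play is
recorded as the single sequence `m` of all moves in the order in which they are made, so that β'
makes the moves with even index. -/
structure IsTandemBetaPlay (σ : ℕ → (ℕ → Set E) → Set E) (m : ℕ → Set E) : Prop where
  legal : ∀ n, TandemLegalHist n m
  move_even : ∀ n, n % 2 = 0 → m n = σ n (pastMoves m n)

namespace IsTandemBetaPlay

lemma isOpen (hm : IsTandemBetaPlay σ m) (n : ℕ) : IsOpen (m n) :=
  ((hm.legal (n + 1)).1 n n.lt_succ_self).1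

lemma nonempty (hm : IsTandemBetaPlay σ m) (n : ℕ) : (m n).Nonempty :=
  ((hm.legal (n + 1)).1 n n.lt_succ_self).2

lemma subset (hm : IsTandemBetaPlay σ m) {i j : ℕ} (hij : i ≤ j)
    (hboard : i % 4 < 2 ↔ j % 4 < 2) : m j ⊆ m i :=
  (hm.legal (j + 1)).subset hij j.lt_succ_self hboard

lemma directed_V (hm : IsTandemBetaPlay σ m) : Directed (· ⊇ ·) fun k => m (4 * k) :=
  Antitone.directed_ge fun _ _ hij => hm.subset (by omega) (by omega)

lemma directed_W (hm : IsTandemBetaPlay σ m) : Directed (· ⊇ ·) fun k => m (4 * k + 2) :=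
  Antitone.directed_ge fun _ _ hij => hm.subset (by omega) (by omega)

end IsTandemBetaPlay

lemma TauStarBaire.exists_isTandemBetaPlay (hE : TauStarBaire E) (hσ : IsTandemBetaStrat σ) :
    ∃ m, IsTandemBetaPlay σ m ∧
      FiltersCluster (fun k => m (4 * k)) ∧ FiltersCluster (fun k => m (4 * k + 2)) := by
  obtain ⟨σα, hα, hwin⟩ := hE σ hσ
  obtain ⟨m, hm⟩ := exists_eq_pastMoves fun n => if n % 2 = 0 then σ n else σα n
  have heven (n : ℕ) (hn : n % 2 = 0) : m n = σ n (pastMoves m n) := by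
    rw [hm, if_pos hn]
  have hodd (n : ℕ) (hn : n % 2 = 1) : m n = σα n (pastMoves m n) := by
    rw [hm, if_neg (by omega)]
  refine ⟨m, ⟨tandemLegalHist_of_follows hσ hα heven hodd, heven⟩,
    hwin _ (fun k => m (4 * k + 1)) _ (fun k => m (4 * k + 3)) (fun k => ?_) fun k => ?_⟩ <;>
    rw [tandemHist_eq_pastMoves, tandemHist_eq_pastMoves]
  · exact ⟨heven _ (by omega), heven _ (by omega)⟩
  · exact ⟨hodd _ (by omega), hodd _ (by omega)⟩

end Play

section InterOrSelf

variable {X : Type*} {T G : Set X}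

open Classical in
/-- The set `T ∩ G` if it is nonempty, and `T` otherwise. It makes a move inside `T` legal when the
intended move `T ∩ G` is empty, as it may be after a history that the strategy did not produce. -/
noncomputable def interOrSelf (T G : Set X) : Set X :=
  if (T ∩ G).Nonempty then T ∩ G else T

lemma interOrSelf_subset_left (T G : Set X) : interOrSelf T G ⊆ T := by
  unfold interOrSelf
  split_ifs
  · exact inter_subset_left
  · exact Subset.rfl

lemma interOrSelf_subset_right (h : (T ∩ G).Nonempty) : interOrSelf T G ⊆ G := by
  rw [interOrSelf, if_pos h]
  exact inter_subset_right

lemma interOrSelf_nonempty (hT : T.Nonempty) (G : Set X) : (interOrSelf T G).Nonempty := by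
  unfold interOrSelf
  split_ifs with h
  · exact h
  · exact hT

lemma isOpen_interOrSelf [TopologicalSpace X] (hT : IsOpen T) (hG : IsOpen G) :
    IsOpen (interOrSelf T G) := by
  unfold interOrSelf
  split_ifs
  · exact hT.inter hG
  · exact hT

end InterOrSelf

section Chase

variable {X Y : Type*} [TopologicalSpace Y] {f : X → Y} {A B : Set X}

/-- The strategy of β' which opens with `A` on the `V`-board and inside `B` on the `W`-board, and
whose moves have images close to the image of the last move on the other board whenever this is
possible. The values at odd `n`, where α' is to move, are irrelevant. -/
noncomputable def chaseStrat (f : X → Y) (A B : Set X) : ℕ → (ℕ → Set X) → Set X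
  | 0, _ | 1, _ => A
  | 2, h | 3, h => interOrSelf B (nearHull f (h 1))
  | n + 4, h => interOrSelf (h (n + 1)) (nearHull f (h (n + 3)))

variable [TopologicalSpace X] {m : ℕ → Set X}

lemma isTandemBetaStrat_chaseStrat (hc : Continuous f) (hA : IsOpen A) (hAne : A.Nonempty)
    (hB : IsOpen B) (hBne : B.Nonempty) : IsTandemBetaStrat (chaseStrat f A B) := by
  intro n h hh hn
  match n with
  | 0 => exact ⟨hA, hAne, by omega⟩
  | 1 | 3 => omega
  | 2 =>
    exact ⟨isOpen_interOrSelf hB (isOpen_nearHull hc _), interOrSelf_nonempty hBne _, by omega⟩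
  | n + 4 =>
    obtain ⟨ho, hne⟩ := hh.1 (n + 1) (by omega)
    exact ⟨isOpen_interOrSelf ho (isOpen_nearHull hc _), interOrSelf_nonempty hne _,
      fun _ => interOrSelf_subset_left _ _⟩

lemma IsTandemBetaPlay.chaseStrat_zero (hm : IsTandemBetaPlay (chaseStrat f A B) m) : m 0 = A :=
  hm.move_even 0 rfl

lemma IsTandemBetaPlay.chaseStrat_two (hm : IsTandemBetaPlay (chaseStrat f A B) m) :
    m 2 = interOrSelf B (nearHull f (m 1)) :=
  hm.move_even 2 rfl

lemma IsTandemBetaPlay.chaseStrat_add_four (hm : IsTandemBetaPlay (chaseStrat f A B) m) {n : ℕ}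
    (hn : n % 2 = 0) : m (n + 4) = interOrSelf (m (n + 1)) (nearHull f (m (n + 3))) := by
  rw [hm.move_even (n + 4) (by omega), chaseStrat, pastMoves_of_lt m (by omega),
    pastMoves_of_lt m (by omega)]

lemma NearlyOpen.image_interOrSelf_nearHull_subset (hf : NearlyOpen f) {S T : Set X}
    (hS : IsOpen S) (hne : S.Nonempty) (hST : f '' S ⊆ closure (f '' T)) :
    f '' interOrSelf T (nearHull f S) ⊆ closure (f '' S) :=
  (image_mono (interOrSelf_subset_right (hf.inter_nearHull_nonempty hS hne hST))).trans
    (image_nearHull_subset f S)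

lemma IsTandemBetaPlay.image_chaseStrat_subset (hm : IsTandemBetaPlay (chaseStrat f A B) m)
    (hf : NearlyOpen f) (hAB : f '' A ⊆ closure (f '' B)) (k : ℕ) :
    f '' m (2 * k + 2) ⊆ closure (f '' m (2 * k + 1)) := by
  induction k with
  | zero =>
    have hsub : m 1 ⊆ A := hm.chaseStrat_zero ▸ hm.subset zero_le_one (by omega)
    rw [hm.chaseStrat_two]
    exact hf.image_interOrSelf_nearHull_subset (hm.isOpen 1) (hm.nonempty 1)
      ((image_mono hsub).trans hAB)
  | succ k ih =>
    have hsub : m (2 * k + 3) ⊆ m (2 * k + 2) := hm.subset (by omega) (by omega)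
    rw [show 2 * (k + 1) + 2 = 2 * k + 4 by ring, hm.chaseStrat_add_four (by omega)]
    exact hf.image_interOrSelf_nearHull_subset (hm.isOpen _) (hm.nonempty _)
      ((image_mono hsub).trans ih)

end Chase

lemma TauStarBaire.inter_nonempty_of_image_subset_closure {X Y : Type*} [TopologicalSpace X]
    [TopologicalSpace Y] [T2Space Y] {f : X → Y} (hX : TauStarBaire X) (hc : Continuous f)
    (hf : NearlyOpen f) (hinj : Function.Injective f) {A B : Set X} (hA : IsOpen A)
    (hB : IsOpen B) (hAne : A.Nonempty) (hAB : f '' A ⊆ closure (f '' B)) :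
    (A ∩ B).Nonempty := by
  have hBne : B.Nonempty := (closure_nonempty_iff.1 ((hAne.image f).mono hAB)).of_image
  obtain ⟨m, hm, hV, hW⟩ :=
    hX.exists_isTandemBetaPlay (isTandemBetaStrat_chaseStrat hc hA hAne hB hBne)
  have hVW (k : ℕ) : f '' m (4 * (k + 1)) ⊆ closure (f '' m (4 * k + 2)) := by
    have himage := hm.image_chaseStrat_subset hf hAB (2 * k + 1)
    rw [show 2 * (2 * k + 1) + 2 = 4 * (k + 1) by ring] at himage
    exact himage.trans (closure_mono (image_mono (hm.subset (by omega) (by omega))))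
  obtain ⟨x, hxV, hxW⟩ := hV.iInter_inter_iInter_nonempty hW hm.directed_V hm.directed_W
    (fun k => hm.nonempty (4 * k)) hc hinj fun k => ⟨k + 1, hVW k⟩
  have hxA : x ∈ A := hm.chaseStrat_zero ▸ mem_iInter.1 hxV 0
  have hx2 : x ∈ interOrSelf B (nearHull f (m 1)) := hm.chaseStrat_two ▸ mem_iInter.1 hxW 0
  exact ⟨x, hxA, interOrSelf_subset_left _ _ hx2⟩

/-- **Second open mapping theorem.** Every semi-regular Hausdorff τ*-Baire space is a
B_r-space. -/
theorem isBrSpace_of_tauStarBaire (E : Type u) [TopologicalSpace E] [T2Space E]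
    (hsr : SemiRegular E) (htau : TauStarBaire E) : IsBrSpace.{u, v} E := by
  intro F _ _ f hc hf hbij
  exact hf.isOpenMap_of_semiRegular hsr hc hbij.surjective fun A B hA hB hAne hAB =>
    htau.inter_nonempty_of_image_subset_closure hc hf hbij.injective hA hB hAne hAB
end

section
/- Let E be a τ*-Baire Hausdorff space, F a Hausdorff space, and f : E → F a continuous nearly open surjection. Suppose f factors as f = g ∘ h, where h : E → G is a continuous surjection onto a semi-regular Hausdorff space G and g : G → F is a continuous bijection. Then g is open. -/
universe u v w

/-! To show that `f ⁻¹' interior (closure (f '' C))` lies in the closure of the saturation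
`f ⁻¹' (f '' C)`, let an open set `A` meet the former. Player β' starts the boards inside `A` and
`C` and always cuts the current board down to the points lying over the interior of the closure of
the image of the other board; near openness keeps these moves nonempty. When α' wins strongly, a
point `x ∈ A` survives on the first board, `f x` lies in the closure of the image of every set on
the second board, and the winning filter condition there yields `z ∈ C` with `f z = f x`. For
`f = g ∘ h` this gives `g ⁻¹' interior (closure (g '' U)) ⊆ closure U` for every open `U`, hence
`interior (closure (g '' U)) ⊆ g '' U` when `U` is regular open. -/

open Set Filter Topology

section StronglyWon

variable {E F : Type*} [TopologicalSpace E] [TopologicalSpace F]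

/-- The strong winning condition of player α' on a single board of the tandem game, as a property
of the sequence of sets played by β' on that board. -/
def StronglyWon (V : ℕ → Set E) : Prop :=
  ∀ l : Filter E, l.NeBot → (∀ k, V k ∈ l) → ∃ x ∈ ⋂ k, V k, ClusterPt x l

theorem StronglyWon.iInter_closure_image_subset [T2Space F] {V : ℕ → Set E} (hV : StronglyWon V)
    (hanti : Antitone V) {f : E → F} (hf : Continuous f) :
    ⋂ k, closure (f '' V k) ⊆ f '' ⋂ k, V k := by
  intro y hy
  let l : Filter E := ⨅ k, 𝓟 (V k) ⊓ comap f (𝓝 y)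
  have hl : l.NeBot := by
    refine iInf_neBot_of_directed' (Antitone.directed_ge fun i j hij =>
      inf_le_inf_right _ (principal_mono.2 (hanti hij))) fun k => ?_
    rw [← map_neBot_iff f, Filter.push_pull, map_principal, inf_comm]
    exact mem_closure_iff_clusterPt.1 (mem_iInter.1 hy k)
  obtain ⟨z, hz, hzl⟩ :=
    hV l hl fun k => mem_iInf_of_mem k (mem_inf_of_left (mem_principal_self _))
  have hlim : Tendsto f l (𝓝 y) := tendsto_comap.mono_left ((iInf_le _ 0).trans inf_le_right)
  exact ⟨z, hz, eq_of_nhds_neBot (hzl.map hf.continuousAt hlim)⟩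

theorem StronglyWon.iInter_nonempty {V : ℕ → Set E} (hV : StronglyWon V) (hanti : Antitone V)
    (hne : ∀ k, (V k).Nonempty) : (⋂ k, V k).Nonempty := by
  have hmem : () ∈ ⋂ k, closure ((fun _ : E => ()) '' V k) :=
    mem_iInter.2 fun k => subset_closure ((hne k).image _).some_mem
  exact Nonempty.of_image ⟨(), hV.iInter_closure_image_subset hanti continuous_const hmem⟩

end StronglyWon

section Play

variable {E : Type*}

/-- The history formed by the first `n` moves of the play `m`, where `m` lists the moves of both
players in the order in which they are made. As in `tandemHist`, later entries are `∅`. -/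
def movesBefore (m : ℕ → Set E) (n : ℕ) : ℕ → Set E :=
  fun i => if i < n then m i else ∅

theorem movesBefore_of_lt {m : ℕ → Set E} {i n : ℕ} (hi : i < n) : movesBefore m n i = m i :=
  if_pos hi

/-- The play in which β' uses the strategy `σβ` and α' uses the strategy `σα`, as a single
sequence of moves. -/
def strategyPlay (σβ σα : ℕ → (ℕ → Set E) → Set E) (n : ℕ) : Set E :=
  (if n % 2 = 0 then σβ n else σα n) fun i => if _h : i < n then strategyPlay σβ σα i else ∅

theorem strategyPlay_of_even (σβ σα : ℕ → (ℕ → Set E) → Set E) {n : ℕ} (hn : n % 2 = 0) :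
    strategyPlay σβ σα n = σβ n (movesBefore (strategyPlay σβ σα) n) := by
  rw [strategyPlay, if_pos hn]
  rfl

theorem strategyPlay_of_odd (σβ σα : ℕ → (ℕ → Set E) → Set E) {n : ℕ} (hn : n % 2 = 1) :
    strategyPlay σβ σα n = σα n (movesBefore (strategyPlay σβ σα) n) := by
  rw [strategyPlay, if_neg (by omega)]
  rfl

theorem tandemMove_mod_four (m : ℕ → Set E) :
    tandemMove (fun k => m (4 * k)) (fun k => m (4 * k + 1)) (fun k => m (4 * k + 2))
      (fun k => m (4 * k + 3)) = m := by
  funext n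
  unfold tandemMove
  split_ifs <;> exact congrArg m (by omega)

theorem tandemHist_mod_four (m : ℕ → Set E) (n : ℕ) :
    tandemHist (fun k => m (4 * k)) (fun k => m (4 * k + 1)) (fun k => m (4 * k + 2))
      (fun k => m (4 * k + 3)) n = movesBefore m n :=
  congrArg (movesBefore · n) (tandemMove_mod_four m)

variable [TopologicalSpace E]

/-- The `n`-th move of `m` obeys the rules of the tandem game. The previous move on the same board
has index `n - 1` if `n` is a turn of α' (`n` odd) and `n - 3` if it is a turn of β' (`n` even). -/
structure LegalMove (m : ℕ → Set E) (n : ℕ) : Prop where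
  isOpen : IsOpen (m n)
  nonempty : (m n).Nonempty
  subset_of_odd : n % 2 = 1 → m n ⊆ m (n - 1)
  subset_of_even : n % 2 = 0 → 4 ≤ n → m n ⊆ m (n - 3)

theorem subset_of_forall_legalMove {m : ℕ → Set E} {n : ℕ} (hm : ∀ i < n, LegalMove m i)
    {i j : ℕ} (hij : i ≤ j) (hj : j < n) (hboard : i % 4 < 2 ↔ j % 4 < 2) : m j ⊆ m i := by
  induction j using Nat.strong_induction_on with
  | _ j ih =>
    rcases hij.eq_or_lt with rfl | hlt
    · exact subset_rfl
    rcases Nat.mod_two_eq_zero_or_one j with heven | hodd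
    · exact ((hm j hj).subset_of_even heven (by omega)).trans
        (ih (j - 3) (by omega) (by omega) (by omega) (by omega))
    · exact ((hm j hj).subset_of_odd hodd).trans
        (ih (j - 1) (by omega) (by omega) (by omega) (by omega))

theorem tandemLegalHist_movesBefore {m : ℕ → Set E} {n : ℕ} (hm : ∀ i < n, LegalMove m i) :
    TandemLegalHist n (movesBefore m n) := by
  refine ⟨fun i hi => ?_, fun i j hij hj hi4 hj4 => ?_, fun i j hij hj hi4 hj4 => ?_⟩
  · rw [movesBefore_of_lt hi]
    exact ⟨(hm i hi).isOpen, (hm i hi).nonempty⟩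
  all_goals
    rw [movesBefore_of_lt hj, movesBefore_of_lt (hij.trans hj)]
    exact subset_of_forall_legalMove hm hij.le hj (by omega)

theorem legalMove_strategyPlay {σβ σα : ℕ → (ℕ → Set E) → Set E} (hβ : IsTandemBetaStrat σβ)
    (hα : IsTandemAlphaStrat σα) (n : ℕ) : LegalMove (strategyPlay σβ σα) n := by
  induction n using Nat.strong_induction_on with
  | _ n ih =>
    have hleg := tandemLegalHist_movesBefore ih
    rcases Nat.mod_two_eq_zero_or_one n with heven | hodd
    · obtain ⟨hopen, hne, hsub⟩ := hβ n _ hleg heven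
      rw [← strategyPlay_of_even σβ σα heven] at hopen hne hsub
      refine ⟨hopen, hne, by omega, fun _ hn => ?_⟩
      exact (hsub hn).trans_eq (movesBefore_of_lt (by omega))
    · obtain ⟨hopen, hne, hsub⟩ := hα n _ hleg hodd
      rw [← strategyPlay_of_odd σβ σα hodd] at hopen hne hsub
      refine ⟨hopen, hne, fun _ => ?_, by omega⟩
      exact hsub.trans_eq (movesBefore_of_lt (by omega))

theorem TauStarBaire.exists_play (hE : TauStarBaire E) {σ : ℕ → (ℕ → Set E) → Set E}
    (hσ : IsTandemBetaStrat σ) :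
    ∃ m : ℕ → Set E, (∀ n, LegalMove m n) ∧ (∀ n, n % 2 = 0 → m n = σ n (movesBefore m n)) ∧
      StronglyWon (fun k => m (4 * k)) ∧ StronglyWon (fun k => m (4 * k + 2)) := by
  obtain ⟨σα, hα, hwin⟩ := hE σ hσ
  refine ⟨strategyPlay σ σα, legalMove_strategyPlay hσ hα,
    fun n hn => strategyPlay_of_even σ σα hn,
    hwin _ (fun k => strategyPlay σ σα (4 * k + 1)) _ (fun k => strategyPlay σ σα (4 * k + 3))
      (fun k => ?_) (fun k => ?_)⟩
  · simp only [tandemHist_mod_four]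
    exact ⟨strategyPlay_of_even σ σα (by omega), strategyPlay_of_even σ σα (by omega)⟩
  · simp only [tandemHist_mod_four]
    exact ⟨strategyPlay_of_odd σ σα (by omega), strategyPlay_of_odd σ σα (by omega)⟩

end Play

section Chase

variable {E F : Type*} [TopologicalSpace F]

/-- The sequence of moves `m` preceded by the fictitious round `A, A, C, C`. It makes the first
moves of β' subject to the same rule as the later ones: before move `n`, the last set on the
current board has index `n + 1` and the last set on the other board has index `n + 3`. -/
def prependRound (A C : Set E) (m : ℕ → Set E) : ℕ → Set E
  | 0 | 1 => A
  | 2 | 3 => C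
  | n + 4 => m n

theorem prependRound_movesBefore (A C : Set E) (m : ℕ → Set E) {n i : ℕ} (hi : i < n + 4) :
    prependRound A C (movesBefore m n) i = prependRound A C m i := by
  match i with
  | 0 | 1 | 2 | 3 => rfl
  | i + 4 => exact movesBefore_of_lt (by omega)

/-- The `n`-th move that β' aims at after the history `p`, when the boards start from `A` and `C`:
the part of the current board lying over the interior of the closure of the image of the other
board. -/
def chaseMove (f : E → F) (A C : Set E) (n : ℕ) (p : ℕ → Set E) : Set E :=
  prependRound A C p (n + 1) ∩ f ⁻¹' interior (closure (f '' prependRound A C p (n + 3)))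

theorem chaseMove_movesBefore (f : E → F) (A C : Set E) (m : ℕ → Set E) (n : ℕ) :
    chaseMove f A C n (movesBefore m n) = chaseMove f A C n m := by
  unfold chaseMove
  rw [prependRound_movesBefore A C m (by omega), prependRound_movesBefore A C m (by omega)]

open Classical in
/-- The strategy of β' that plays `chaseMove`. Against histories in which β' has not followed it,
`chaseMove` may be empty; β' then repeats the last set on the current board. -/
noncomputable def chaseStrategy (f : E → F) (A C : Set E) (n : ℕ) (p : ℕ → Set E) : Set E :=
  if (chaseMove f A C n p).Nonempty then chaseMove f A C n p else prependRound A C p (n + 1)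

variable [TopologicalSpace E]

theorem isOpen_and_nonempty_prependRound {A C : Set E} (hA : IsOpen A) (hAne : A.Nonempty)
    (hC : IsOpen C) (hCne : C.Nonempty) {m : ℕ → Set E} {n : ℕ}
    (hm : ∀ i < n, IsOpen (m i) ∧ (m i).Nonempty) {i : ℕ} (hi : i < n + 4) :
    IsOpen (prependRound A C m i) ∧ (prependRound A C m i).Nonempty := by
  match i with
  | 0 | 1 => exact ⟨hA, hAne⟩
  | 2 | 3 => exact ⟨hC, hCne⟩
  | i + 4 => exact hm i (by omega)

theorem isTandemBetaStrat_chaseStrategy {f : E → F} (hf : Continuous f) {A C : Set E}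
    (hA : IsOpen A) (hAne : A.Nonempty) (hC : IsOpen C) (hCne : C.Nonempty) :
    IsTandemBetaStrat (chaseStrategy f A C) := by
  intro n p hp _
  have hlast : 4 ≤ n → prependRound A C p (n + 1) = p (n - 3) := fun hn => by
    rw [show n + 1 = n - 3 + 4 by omega]
    rfl
  obtain ⟨hopen, hne⟩ :=
    isOpen_and_nonempty_prependRound hA hAne hC hCne hp.1 (show n + 1 < n + 4 by omega)
  unfold chaseStrategy
  split_ifs with hchase
  · exact ⟨hopen.inter (isOpen_interior.preimage hf), hchase,
      fun hn => inter_subset_left.trans_eq (hlast hn)⟩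
  · exact ⟨hopen, hne, fun hn => (hlast hn).subset⟩

theorem NearlyOpen.inter_preimage_nonempty {f : E → F} (hf : NearlyOpen f) {A C : Set E}
    (hA : IsOpen A) (hne : A.Nonempty) (hAC : f '' A ⊆ closure (f '' C)) :
    (C ∩ f ⁻¹' interior (closure (f '' A))).Nonempty := by
  obtain ⟨a, ha⟩ := hne
  have hfa : f a ∈ f '' A := mem_image_of_mem f ha
  obtain ⟨_, hy, c, hc, rfl⟩ :=
    mem_closure_iff.1 (hAC hfa) _ isOpen_interior (hf A hA hfa)
  exact ⟨c, hc, hy⟩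

theorem NearlyOpen.eq_chaseMove {f : E → F} (hf : NearlyOpen f) {A C : Set E}
    (hAC : (A ∩ f ⁻¹' interior (closure (f '' C))).Nonempty) {m : ℕ → Set E}
    (hleg : ∀ n, LegalMove m n)
    (hm : ∀ n, n % 2 = 0 → m n = chaseStrategy f A C n (movesBefore m n)) (k : ℕ) :
    m (2 * k) = chaseMove f A C (2 * k) m := by
  have eq_of_nonempty (n : ℕ) (hn : n % 2 = 0) (hne : (chaseMove f A C n m).Nonempty) :
      m n = chaseMove f A C n m := by
    rw [hm n hn, chaseStrategy, chaseMove_movesBefore, if_pos hne]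
  induction k with
  | zero => exact eq_of_nonempty 0 rfl hAC
  | succ k ih =>
    have hsub : m (2 * k + 1) ⊆ chaseMove f A C (2 * k) m :=
      ((hleg (2 * k + 1)).subset_of_odd (by omega)).trans_eq ih
    have himage : f '' m (2 * k + 1) ⊆ closure (f '' prependRound A C m (2 * k + 3)) :=
      (image_subset_iff.2 (hsub.trans inter_subset_right)).trans interior_subset
    exact eq_of_nonempty _ (by omega) (hf.inter_preimage_nonempty (hleg (2 * k + 1)).isOpen
      (hleg (2 * k + 1)).nonempty himage)

theorem NearlyOpen.image_inter_image_nonempty [T2Space F] {f : E → F} (hf : NearlyOpen f)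
    (hfc : Continuous f) (hE : TauStarBaire E) {A C : Set E} (hA : IsOpen A) (hC : IsOpen C)
    (hAC : (A ∩ f ⁻¹' interior (closure (f '' C))).Nonempty) : (f '' A ∩ f '' C).Nonempty := by
  have hCne : C.Nonempty :=
    (closure_nonempty_iff.1 ⟨_, interior_subset hAC.some_mem.2⟩).of_image
  obtain ⟨m, hleg, hm, hwinV, hwinW⟩ :=
    hE.exists_play (isTandemBetaStrat_chaseStrategy hfc hA hAC.left hC hCne)
  have hchase := hf.eq_chaseMove hAC hleg hm
  have hsub {i j : ℕ} (hij : i ≤ j) (hboard : i % 4 < 2 ↔ j % 4 < 2) : m j ⊆ m i :=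
    subset_of_forall_legalMove (fun i _ => hleg i) hij j.lt_succ_self hboard
  have hantiV : Antitone fun k => m (4 * k) := fun i j hij => hsub (by omega) (by omega)
  have hantiW : Antitone fun k => m (4 * k + 2) := fun i j hij => hsub (by omega) (by omega)
  obtain ⟨x, hx⟩ := hwinV.iInter_nonempty hantiV fun k => (hleg _).nonempty
  have hclosure : f x ∈ ⋂ k, closure (f '' m (4 * k + 2)) := by
    refine mem_iInter.2 fun k => ?_
    have hxV : x ∈ m (2 * (2 * k + 2)) := by
      convert mem_iInter.1 hx (k + 1) using 2
      ring
    have hx_over : f x ∈ interior (closure (f '' m (2 * (2 * k + 1) + 1))) :=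
      ((hchase (2 * k + 2)).subset hxV).2
    exact closure_mono (image_mono (hsub (by omega) (by omega))) (interior_subset hx_over)
  obtain ⟨z, hz, hzx⟩ := hwinW.iInter_closure_image_subset hantiW hfc hclosure
  have hxA : x ∈ A := ((hchase 0).subset (mem_iInter.1 hx 0)).1
  have hzC : z ∈ C := ((hchase 1).subset (mem_iInter.1 hz 0)).1
  exact ⟨f x, mem_image_of_mem f hxA, z, hzC, hzx⟩

theorem NearlyOpen.preimage_interior_closure_image_subset [T2Space F] {f : E → F}
    (hf : NearlyOpen f) (hfc : Continuous f) (hE : TauStarBaire E) {C : Set E} (hC : IsOpen C) :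
    f ⁻¹' interior (closure (f '' C)) ⊆ closure (f ⁻¹' (f '' C)) := by
  refine fun x hx => mem_closure_iff.2 fun A hA hxA => ?_
  obtain ⟨_, ⟨y, hyA, rfl⟩, hyC⟩ := hf.image_inter_image_nonempty hfc hE hA hC ⟨x, hxA, hx⟩
  exact ⟨y, hyA, hyC⟩

end Chase

section Factorization

variable {E F G : Type*}

theorem image_comp_preimage (g : G → F) {h : E → G} (hh : Function.Surjective h) (U : Set G) :
    (g ∘ h) '' (h ⁻¹' U) = g '' U := by
  rw [image_comp, image_preimage_eq U hh]

variable [TopologicalSpace E] [TopologicalSpace F] [TopologicalSpace G]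

theorem NearlyOpen.of_comp {g : G → F} {h : E → G} (hgh : NearlyOpen (g ∘ h))
    (hhc : Continuous h) (hhs : Function.Surjective h) : NearlyOpen g := by
  intro U hU
  exact image_comp_preimage g hhs U ▸ hgh _ (hU.preimage hhc)

theorem SemiRegular.isOpenMap_of_nearlyOpen (hG : SemiRegular G) {g : G → F} (hg : NearlyOpen g)
    (hgc : Continuous g) (hgs : Function.Surjective g)
    (hcl : ∀ U, IsOpen U → g ⁻¹' interior (closure (g '' U)) ⊆ closure U) : IsOpenMap g := by
  intro O hO
  refine isOpen_iff_forall_mem_open.2 ?_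
  rintro _ ⟨u, hu, rfl⟩
  obtain ⟨U, hreg, huU, hUO⟩ := hG O u hO hu
  have hU : IsOpen U := hreg ▸ isOpen_interior
  have hpre : g ⁻¹' interior (closure (g '' U)) ⊆ U :=
    (interior_maximal (hcl U hU) (isOpen_interior.preimage hgc)).trans_eq hreg.symm
  refine ⟨interior (closure (g '' U)), ?_, isOpen_interior, hg U hU (mem_image_of_mem g huU)⟩
  rw [← image_preimage_eq (interior _) hgs]
  exact image_mono (hpre.trans hUO)

theorem isOpenMap_of_factorization_tauStarBaire_general [T2Space F] (hE : TauStarBaire E)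
    (hG : SemiRegular G) {h : E → G} {g : G → F} (hgh : NearlyOpen (g ∘ h)) (hhc : Continuous h)
    (hhs : Function.Surjective h) (hgc : Continuous g) (hgb : Function.Bijective g) :
    IsOpenMap g := by
  refine hG.isOpenMap_of_nearlyOpen (hgh.of_comp hhc hhs) hgc hgb.surjective fun U hU => ?_
  have himage := image_comp_preimage g hhs U
  rw [← hhs.preimage_subset_preimage_iff]
  calc h ⁻¹' (g ⁻¹' interior (closure (g '' U)))
      = (g ∘ h) ⁻¹' interior (closure ((g ∘ h) '' (h ⁻¹' U))) := by rw [himage, preimage_comp]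
    _ ⊆ closure ((g ∘ h) ⁻¹' ((g ∘ h) '' (h ⁻¹' U))) :=
      hgh.preimage_interior_closure_image_subset (hgc.comp hhc) hE (hU.preimage hhc)
    _ = closure (h ⁻¹' U) := by rw [himage, preimage_comp, preimage_image_eq U hgb.injective]
    _ ⊆ h ⁻¹' closure U := hhc.closure_preimage_subset U

end Factorization

/-- Let `E` be a τ*-Baire Hausdorff space and `f : E → F` a continuous nearly open
surjection onto a Hausdorff space `F`. If `f = g ∘ h` with `h : E → G` a continuous
surjection onto a semi-regular Hausdorff space `G` and `g : G → F` a continuous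
bijection, then `g` is open. -/
theorem isOpenMap_of_factorization_tauStarBaire (E : Type u) [TopologicalSpace E] [T2Space E]
    (F : Type v) [TopologicalSpace F] [T2Space F]
    (G : Type w) [TopologicalSpace G] [T2Space G]
    (htau : TauStarBaire E) (hG : SemiRegular G)
    (f : E → F) (h : E → G) (g : G → F)
    (hfc : Continuous f) (hfno : NearlyOpen f) (hfs : Function.Surjective f)
    (hhc : Continuous h) (hhs : Function.Surjective h)
    (hgc : Continuous g) (hgb : Function.Bijective g)
    (hfac : f = g ∘ h) :
    IsOpenMap g := by
  subst hfac
  exact isOpenMap_of_factorization_tauStarBaire_general htau hG hfno hhc hhs hgc hgb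
end

section
/- Let E be a B_r-space and let f : E → F be a continuous, injective, nearly open map into a Hausdorff space F whose image f(E) is dense in F. Then f is a homeomorphic embedding, i.e., f is a homeomorphism of E onto the subspace f(E) of F. -/
universe u v w

theorem NearlyOpen.of_comp_isInducing {X Y Z : Type*} [TopologicalSpace X] [TopologicalSpace Y]
    [TopologicalSpace Z] {f : X → Y} {g : Y → Z} (hgf : NearlyOpen (g ∘ f))
    (hg : Topology.IsInducing g) : NearlyOpen f := by
  intro U hU
  calc
    f '' U ⊆ g ⁻¹' interior (closure (g ∘ f '' U)) := by
      rw [← Set.image_subset_iff, ← Set.image_comp]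
      exact hgf U hU
    _ ⊆ interior (g ⁻¹' closure (g ∘ f '' U)) :=
      preimage_interior_subset_interior_preimage hg.continuous
    _ = interior (closure (f '' U)) := by
      rw [Set.image_comp, ← hg.closure_eq_preimage_closure_image]

theorem NearlyOpen.codRestrict {X Y : Type*} [TopologicalSpace X] [TopologicalSpace Y]
    {f : X → Y} (hf : NearlyOpen f) {s : Set Y} (hs : ∀ x, f x ∈ s) :
    NearlyOpen (Set.codRestrict f s hs) :=
  NearlyOpen.of_comp_isInducing (g := Subtype.val) hf Topology.IsInducing.subtypeVal

theorem isHomeomorph_rangeRestrict_of_isBrSpace_general {E : Type u} [TopologicalSpace E]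
    [T2Space E] {F : Type v} [TopologicalSpace F] (hBr : IsBrSpace.{u, v} E) {f : E → F}
    [T2Space (Set.range f)] (hc : Continuous f) (hi : Function.Injective f) (hno : NearlyOpen f) :
    IsHomeomorph (Set.codRestrict f (Set.range f) (fun x => Set.mem_range_self x)) := by
  have hcont : Continuous (Set.codRestrict f (Set.range f) Set.mem_range_self) :=
    hc.codRestrict _
  have hbij : Function.Bijective (Set.codRestrict f (Set.range f) Set.mem_range_self) :=
    ⟨hi.codRestrict _, Set.codRestrict_range_surjective f⟩
  exact ⟨hcont, hBr _ _ hcont (hno.codRestrict _) hbij, hbij⟩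

/-- Let `E` be a B_r-space and `f : E → F` a continuous, injective, nearly open map
into a Hausdorff space `F` with dense image. Then `f` is a homeomorphic embedding:
the corestriction of `f` onto the subspace `f(E) = Set.range f` of `F` is a
homeomorphism. -/
theorem isHomeomorph_rangeRestrict_of_isBrSpace (E : Type u) [TopologicalSpace E] [T2Space E]
    (F : Type v) [TopologicalSpace F] [T2Space F]
    (hBr : IsBrSpace.{u, v} E)
    (f : E → F) (hc : Continuous f) (hi : Function.Injective f) (hno : NearlyOpen f)
    (hd : Dense (Set.range f)) :
    IsHomeomorph (Set.codRestrict f (Set.range f) (fun x => Set.mem_range_self x)) :=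
  isHomeomorph_rangeRestrict_of_isBrSpace_general hBr hc hi hno
end

section
/- Every H-minimal Hausdorff space is a B_q-space. -/
universe u v w

/-- A Hausdorff space is *H-minimal* if there is no strictly coarser Hausdorff topology
on its underlying set.  (In Mathlib's order on `TopologicalSpace`, `t ≤ t'` means that
`t` is finer than `t'`, so topologies coarser than `t` are those `t'` with `t ≤ t'`.) -/
def HMinimal (E : Type*) [t : TopologicalSpace E] : Prop :=
  ∀ t' : TopologicalSpace E, t ≤ t' → @T2Space E t' → t' = t

/-- A Hausdorff space `E` is a *B_q-space* if for every continuous nearly open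
surjection `f` from `E` onto a Hausdorff space `F` and every factorization
`f = g ∘ h` with `h : E → G` a continuous surjection onto a semi-regular Hausdorff
space `G` and `g : G → F` a continuous bijection, the map `g` is a homeomorphism. -/
def IsBqSpace.{u', v', w'} (E : Type u') [TopologicalSpace E] [T2Space E] : Prop :=
  ∀ (F : Type v') [TopologicalSpace F] [T2Space F]
    (G : Type w') [TopologicalSpace G] [T2Space G],
    SemiRegular G →
    ∀ (f : E → F) (h : E → G) (g : G → F),
      Continuous f → NearlyOpen f → Function.Surjective f →
      Continuous h → Function.Surjective h →
      Continuous g → Function.Bijective g →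
      f = g ∘ h → IsHomeomorph g

/-!
In a semi-regular space whose open filters all have cluster points, an open filter with at most one
cluster point converges to it. For a continuous injection `g` into a Hausdorff space, the open
filter `comap g (𝓝 (g x))` can only cluster at `x`, so it converges to `x` and `g` is an embedding.
The existence of cluster points of open filters passes to continuous images, and it holds in an
H-minimal space: if an open filter `l` has no cluster point other than `p`, then adding `l` to the
neighborhood filter of `p` yields a coarser Hausdorff topology, namely `t ⊔ nhdsAdjoint p l` for the
given topology `t`, so minimality forces `l ≤ 𝓝 p`, and a proper `l` clusters at `p` after all.
-/

open Filter Function Set Topology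

section OpenFilter

variable {X Y : Type*} [TopologicalSpace X] [TopologicalSpace Y] {l l' : Filter X}

/-- An *open filter* is a filter with a base of open sets; equivalently, it contains the interior
of each of its members. The trivial filter `⊥` is allowed. -/
def IsOpenFilter (l : Filter X) : Prop :=
  ∀ s ∈ l, interior s ∈ l

theorem isOpenFilter_nhds (x : X) : IsOpenFilter (𝓝 x) :=
  fun _ => interior_mem_nhds.2

theorem isOpenFilter_principal {U : Set X} (hU : IsOpen U) : IsOpenFilter (𝓟 U) :=
  fun _ hs => interior_maximal hs hU

namespace IsOpenFilter

theorem inf (hl : IsOpenFilter l) (hl' : IsOpenFilter l') : IsOpenFilter (l ⊓ l') := by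
  rintro _ ⟨s, hs, t, ht, rfl⟩
  rw [interior_inter]
  exact inter_mem_inf (hl s hs) (hl' t ht)

theorem comap {l : Filter Y} (hl : IsOpenFilter l) {f : X → Y} (hf : Continuous f) :
    IsOpenFilter (l.comap f) := by
  rintro s ⟨t, ht, hts⟩
  exact ⟨interior t, hl t ht,
    (preimage_interior_subset_interior_preimage hf).trans (interior_mono hts)⟩

end IsOpenFilter

end OpenFilter

section QuasiHClosed

variable {X Y : Type*} [TopologicalSpace X] [TopologicalSpace Y]

/-- A topological space is *quasi-H-closed* if every proper open filter has a cluster point.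
A Hausdorff space has this property iff it is *H-closed*, that is, closed in every Hausdorff space
containing it as a subspace. -/
def QuasiHClosed (X : Type*) [TopologicalSpace X] : Prop :=
  ∀ l : Filter X, l.NeBot → IsOpenFilter l → ∃ x, ClusterPt x l

namespace QuasiHClosed

theorem of_continuous_surjective (hX : QuasiHClosed X) {f : X → Y} (hf : Continuous f)
    (hsurj : Surjective f) : QuasiHClosed Y := by
  intro l hne hl
  obtain ⟨x, hx⟩ := hX (l.comap f) (hne.comap_of_surj hsurj) (hl.comap hf)
  exact ⟨f x, hx.map hf.continuousAt tendsto_comap⟩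

theorem closure_mem (hX : QuasiHClosed X) {l : Filter X} (hl : IsOpenFilter l) {s : Set X}
    (hs : ∀ x, ClusterPt x l → x ∈ interior (closure s)) : closure s ∈ l := by
  by_contra hmem
  have hne : (l ⊓ 𝓟 (closure s)ᶜ).NeBot := by
    rwa [neBot_iff, Ne, ← mem_iff_inf_principal_compl]
  obtain ⟨x, hx⟩ := hX _ hne (hl.inf (isOpenFilter_principal isClosed_closure.isOpen_compl))
  have hx' : x ∈ closure (closure s)ᶜ := mem_closure_iff_clusterPt.2 (hx.mono inf_le_right)
  rw [closure_compl] at hx'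
  exact hx' (hs x (hx.mono inf_le_left))

theorem le_nhds_of_semiRegular (hX : QuasiHClosed X) (hreg : SemiRegular X) {l : Filter X}
    (hl : IsOpenFilter l) {p : X} (hp : ∀ x, ClusterPt x l → x = p) : l ≤ 𝓝 p := by
  intro s hs
  obtain ⟨V, hV, hpV, hVs⟩ := hreg (interior s) p isOpen_interior (mem_interior_iff_mem_nhds.2 hs)
  have hclosure : closure V ∈ l := hX.closure_mem hl fun x hx => by rwa [hp x hx, ← hV]
  have hVl : V ∈ l := hV ▸ hl _ hclosure
  exact mem_of_superset hVl (hVs.trans interior_subset)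

theorem isEmbedding_of_semiRegular [T2Space Y] (hX : QuasiHClosed X) (hreg : SemiRegular X)
    {g : X → Y} (hg : Continuous g) (hinj : Injective g) : IsEmbedding g := by
  refine ⟨isInducing_iff_nhds.2 fun x => le_antisymm (hg.tendsto x).le_comap ?_, hinj⟩
  refine hX.le_nhds_of_semiRegular hreg ((isOpenFilter_nhds (g x)).comap hg) fun y hy => hinj ?_
  have hgy : ClusterPt (g y) (𝓝 (g x)) := hy.map hg.continuousAt tendsto_comap
  exact eq_of_nhds_neBot hgy

end QuasiHClosed

end QuasiHClosed

section HMinimal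

variable {X : Type*} [t : TopologicalSpace X] {l : Filter X} {p x : X}

theorem nhds_sup_nhdsAdjoint_self (hl : IsOpenFilter l) :
    @nhds X (t ⊔ nhdsAdjoint p l) p = 𝓝 p ⊔ l := by
  refine le_antisymm (fun s hs => ?_)
    (sup_le (nhds_mono le_sup_left) ((gc_nhds p).le_iff_le.1 le_sup_right))
  exact (@mem_nhds_iff X (t ⊔ nhdsAdjoint p l) p s).2 ⟨interior s, interior_subset,
    ⟨isOpen_interior, fun _ => hl s hs.2⟩, mem_interior_iff_mem_nhds.2 hs.1⟩

theorem nhds_sup_nhdsAdjoint_of_ne [T1Space X] (hx : x ≠ p) :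
    @nhds X (t ⊔ nhdsAdjoint p l) x = 𝓝 x := by
  refine le_antisymm (fun s hs => ?_) (nhds_mono le_sup_left)
  exact (@mem_nhds_iff X (t ⊔ nhdsAdjoint p l) x s).2
    ⟨interior s \ {p}, sdiff_subset.trans interior_subset,
      ⟨isOpen_interior.sdiff isClosed_singleton, fun hp => (hp.2 rfl).elim⟩,
      mem_interior_iff_mem_nhds.2 hs, hx⟩

theorem t2Space_sup_nhdsAdjoint [T2Space X] (hl : IsOpenFilter l)
    (hp : ∀ x, ClusterPt x l → x = p) : @T2Space X (t ⊔ nhdsAdjoint p l) := by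
  have disjoint_nhds_p : ∀ x, x ≠ p → Disjoint (𝓝 x) (𝓝 p ⊔ l) := fun x hx =>
    disjoint_sup_right.2 ⟨disjoint_nhds_nhds.2 hx,
      disjoint_iff.2 (not_neBot.1 fun hxl => hx (hp x hxl))⟩
  refine (@t2Space_iff_disjoint_nhds X (t ⊔ nhdsAdjoint p l)).2 fun x y hxy => ?_
  rcases eq_or_ne x p with rfl | hx
  · rw [nhds_sup_nhdsAdjoint_self hl, nhds_sup_nhdsAdjoint_of_ne hxy.symm]
    exact (disjoint_nhds_p y hxy.symm).symm
  rcases eq_or_ne y p with rfl | hy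
  · rw [nhds_sup_nhdsAdjoint_self hl, nhds_sup_nhdsAdjoint_of_ne hx]
    exact disjoint_nhds_p x hx
  · rw [nhds_sup_nhdsAdjoint_of_ne hx, nhds_sup_nhdsAdjoint_of_ne hy]
    exact disjoint_nhds_nhds.2 hxy

namespace HMinimal

variable [T2Space X]

theorem le_nhds (hX : HMinimal X) (hl : IsOpenFilter l) (hp : ∀ x, ClusterPt x l → x = p) :
    l ≤ 𝓝 p := by
  have heq : t ⊔ nhdsAdjoint p l = t := hX _ le_sup_left (t2Space_sup_nhdsAdjoint hl hp)
  exact (gc_nhds p).le_iff_le.1 (sup_eq_left.1 heq)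

theorem quasiHClosed (hX : HMinimal X) : QuasiHClosed X := by
  intro l hne hl
  by_contra! hcl
  obtain ⟨p⟩ : Nonempty X := l.nonempty_of_neBot
  have hlp : l ≤ 𝓝 p := hX.le_nhds hl fun x hx => (hcl x hx).elim
  exact hcl p (ClusterPt.of_le_nhds hlp)

end HMinimal

end HMinimal

theorem isBqSpace_of_hMinimal_general {E F G : Type*} [TopologicalSpace E] [TopologicalSpace F]
    [T2Space F] [TopologicalSpace G] (hE : QuasiHClosed E) (hG : SemiRegular G) {h : E → G}
    (hh : Continuous h) (hsurj : Surjective h) {g : G → F} (hg : Continuous g)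
    (hbij : Bijective g) : IsHomeomorph g :=
  have hGclosed : QuasiHClosed G := hE.of_continuous_surjective hh hsurj
  isHomeomorph_iff_isEmbedding_surjective.2
    ⟨hGclosed.isEmbedding_of_semiRegular hG hg hbij.injective, hbij.surjective⟩

/-- Every H-minimal Hausdorff space is a B_q-space. -/
theorem isBqSpace_of_hMinimal (E : Type u) [TopologicalSpace E] [T2Space E]
    (hmin : HMinimal E) : IsBqSpace.{u, v, w} E := by
  intro F _ _ G _ _ hG f h g _ _ _ hh hsurj hg hbij _
  exact isBqSpace_of_hMinimal_general hmin.quasiHClosed hG hh hsurj hg hbij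
end

section
/- Let E be a semi-regular Hausdorff space containing a dense subspace D (with the subspace topology) which is a B_q-space. Then E is a B_q-space. -/
universe u v w

/-!
A continuous nearly open map `g` on a semi-regular space `G` is inducing as soon as its restriction
to a dense subspace `S` is: if `V` is regular open in `G`, then `g ⁻¹' interior (closure (g '' V))`
is open and its trace on `S` lies in the closure of `V ∩ S`, so by density it is contained in
`interior (closure V) = V`. Given a factorization `g ∘ h` over `E` and a dense B_q-subspace `D`
of `E`, this applies to `S = h '' D`, because near openness and semi-regularity pass to dense
subspaces and the B_q-property of `D` makes `g` a homeomorphism from `S` onto `g '' S`.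
-/

open Function Set Topology

theorem closure_comp_image_preimage_of_isOpen {X Y Z : Type*} [TopologicalSpace Y]
    [TopologicalSpace Z] {i : X → Y} {f : Y → Z} (hi : DenseRange i) (hf : Continuous f)
    {U : Set Y} (hU : IsOpen U) :
    closure ((f ∘ i) '' (i ⁻¹' U)) = closure (f '' U) := by
  rw [image_comp]
  refine (closure_mono (image_mono (image_preimage_subset i U))).antisymm ?_
  calc
    closure (f '' U) ⊆ closure (f '' closure (i '' (i ⁻¹' U))) :=
      closure_mono (image_mono (hi.subset_closure_image_preimage_of_isOpen hU))
    _ = closure (f '' (i '' (i ⁻¹' U))) := closure_image_closure hf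

section DensePreimage

variable {X Y Z : Type*} [TopologicalSpace X] [TopologicalSpace Y] [TopologicalSpace Z]
  {i : X → Y} {f : Y → Z}

theorem subset_interior_closure_of_preimage_subset_closure (hi : DenseRange i)
    (hc : Continuous i) {O V : Set Y} (hO : IsOpen O) (h : i ⁻¹' O ⊆ closure (i ⁻¹' V)) :
    O ⊆ interior (closure V) := by
  refine interior_maximal ?_ hO
  calc
    O ⊆ closure (i '' (i ⁻¹' O)) := hi.subset_closure_image_preimage_of_isOpen hO
    _ ⊆ closure (i '' closure (i ⁻¹' V)) := closure_mono (image_mono h)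
    _ = closure (i '' (i ⁻¹' V)) := closure_image_closure hc
    _ ⊆ closure V := closure_mono (image_preimage_subset i V)

theorem interior_closure_preimage_eq_of_regularOpen (hi : IsDenseInducing i) {V : Set Y}
    (hV : V = interior (closure V)) : interior (closure (i ⁻¹' V)) = i ⁻¹' V := by
  have hVo : IsOpen V := hV ▸ isOpen_interior
  refine Subset.antisymm ?_ (interior_maximal subset_closure (hVo.preimage hi.continuous))
  obtain ⟨O, hO, hO_eq⟩ := hi.isOpen_iff.mp (isOpen_interior (s := closure (i ⁻¹' V)))
  have hOV : O ⊆ interior (closure V) :=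
    subset_interior_closure_of_preimage_subset_closure hi.dense hi.continuous hO
      (hO_eq.trans_subset interior_subset)
  rw [← hO_eq]
  exact preimage_mono (hOV.trans hV.symm.subset)

theorem SemiRegular.of_isDenseInducing (hY : SemiRegular Y) (hi : IsDenseInducing i) :
    SemiRegular X := by
  intro W x hW hx
  obtain ⟨U, hU, rfl⟩ := hi.isOpen_iff.mp hW
  obtain ⟨V, hV, hxV, hVU⟩ := hY U (i x) hU hx
  exact ⟨i ⁻¹' V, (interior_closure_preimage_eq_of_regularOpen hi hV).symm, hxV,
    preimage_mono hVU⟩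

theorem NearlyOpen.comp_isDenseInducing (hf : NearlyOpen f) (hc : Continuous f)
    (hi : IsDenseInducing i) : NearlyOpen (f ∘ i) := by
  intro W hW
  obtain ⟨U, hU, rfl⟩ := hi.isOpen_iff.mp hW
  calc
    (f ∘ i) '' (i ⁻¹' U) ⊆ f '' U := by
      rw [image_comp]
      exact image_mono (image_preimage_subset i U)
    _ ⊆ interior (closure (f '' U)) := hf U hU
    _ = interior (closure ((f ∘ i) '' (i ⁻¹' U))) := by
      rw [closure_comp_image_preimage_of_isOpen hi.dense hc hU]

theorem NearlyOpen.isInducing_of_comp_denseRange (hf : NearlyOpen f) (hY : SemiRegular Y)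
    (hc : Continuous f) (hi : DenseRange i) (hic : Continuous i) (hfi : IsInducing (f ∘ i)) :
    IsInducing f := by
  refine isInducing_iff_nhds.mpr fun y ↦ (hc.tendsto y).le_comap.antisymm fun U hU ↦ ?_
  obtain ⟨O, hOU, hO, hyO⟩ := mem_nhds_iff.mp hU
  obtain ⟨V, hV, hyV, hVO⟩ := hY O y hO hyO
  have hVo : IsOpen V := hV ▸ isOpen_interior
  have htrace : i ⁻¹' (f ⁻¹' interior (closure (f '' V))) ⊆ closure (i ⁻¹' V) := by
    rw [hfi.closure_eq_preimage_closure_image, closure_comp_image_preimage_of_isOpen hi hc hVo]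
    exact preimage_mono (preimage_mono interior_subset)
  have hpreimage : f ⁻¹' interior (closure (f '' V)) ⊆ V :=
    (subset_interior_closure_of_preimage_subset_closure hi hic
      (isOpen_interior.preimage hc) htrace).trans hV.symm.subset
  exact ⟨_, isOpen_interior.mem_nhds (hf V hVo (mem_image_of_mem f hyV)),
    hpreimage.trans (hVO.trans hOU)⟩

end DensePreimage

section Composition

variable {X Y Z : Type*} [TopologicalSpace X] [TopologicalSpace Y] [TopologicalSpace Z]
  {f : X → Y} {g : Y → Z}

theorem NearlyOpen.of_comp_surjective (hgf : NearlyOpen (g ∘ f)) (hc : Continuous f)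
    (hs : Surjective f) : NearlyOpen g := by
  intro V hV
  have himage := hgf (f ⁻¹' V) (hV.preimage hc)
  rwa [image_comp, image_preimage_eq V hs] at himage

theorem NearlyOpen.of_comp_isInducing_s11 (hgf : NearlyOpen (g ∘ f)) (hg : IsInducing g) :
    NearlyOpen f := by
  intro U hU
  have himage : f '' U ⊆ g ⁻¹' interior (closure (g '' (f '' U))) := by
    rw [← image_subset_iff, ← image_comp]
    exact hgf U hU
  refine himage.trans (interior_maximal ?_ (isOpen_interior.preimage hg.continuous))
  rw [hg.closure_eq_preimage_closure_image]
  exact preimage_mono interior_subset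

end Composition

theorem IsBqSpace.isInducing_restrict_range {D : Type*} [TopologicalSpace D] [T2Space D]
    (hD : IsBqSpace.{_, v, w} D) {F : Type v} [TopologicalSpace F] [T2Space F]
    {G : Type w} [TopologicalSpace G] [T2Space G] {k : D → G} {g : G → F}
    (hS : SemiRegular (range k)) (hk : Continuous k) (hg : Continuous g) (hinj : Injective g)
    (hgk : NearlyOpen (g ∘ k)) : IsInducing (g ∘ ((↑) : range k → G)) := by
  let k' : D → range k := rangeFactorization k
  let g' : range k → g '' range k := imageFactorization g (range k)
  have hk' : Continuous k' := hk.rangeFactorization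
  have hg' : Continuous g' := (hg.comp continuous_subtype_val).subtype_mk _
  have hk's : Surjective k' := rangeFactorization_surjective
  have hg'b : Bijective g' :=
    ⟨hinj.injOn.imageFactorization_injective, imageFactorization_surjective⟩
  have hgk' : NearlyOpen (g' ∘ k') := NearlyOpen.of_comp_isInducing_s11 hgk IsInducing.subtypeVal
  have hhomeo : IsHomeomorph g' :=
    hD _ _ hS (g' ∘ k') k' g' (hg'.comp hk') hgk' (hg'b.surjective.comp hk's) hk' hk's hg' hg'b rfl
  exact IsInducing.subtypeVal.comp hhomeo.isInducing

theorem isBqSpace_of_dense_isBqSpace_general {E D : Type*} [TopologicalSpace E] [T2Space E]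
    [TopologicalSpace D] [T2Space D] {i : D → E} (hi : IsDenseInducing i)
    (hD : IsBqSpace.{_, v, w} D) : IsBqSpace.{_, v, w} E := by
  rintro F _ _ G _ _ hG _ h g hf hfn - hh hhs hg hgb rfl
  have hdense : Dense (range (h ∘ i)) := hhs.denseRange.comp hi.dense hh
  have hS : SemiRegular (range (h ∘ i)) :=
    hG.of_isDenseInducing hdense.isDenseEmbedding_val.isDenseInducing
  have hrestrict : IsInducing (g ∘ ((↑) : range (h ∘ i) → G)) :=
    hD.isInducing_restrict_range hS (hh.comp hi.continuous) hg hgb.injective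
      (hfn.comp_isDenseInducing hf hi)
  have hginducing : IsInducing g :=
    (hfn.of_comp_surjective hh hhs).isInducing_of_comp_denseRange hG hg hdense.denseRange_val
      continuous_subtype_val hrestrict
  exact isHomeomorph_iff_isEmbedding_surjective.mpr ⟨⟨hginducing, hgb.injective⟩, hgb.surjective⟩

/-- Let `E` be a semi-regular Hausdorff space containing a dense subspace `D` which is
a B_q-space. Then `E` is a B_q-space. -/
theorem isBqSpace_of_dense_isBqSpace (E : Type u) [TopologicalSpace E] [T2Space E]
    (hsr : SemiRegular E) (D : Set E) (hD : Dense D)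
    (hBq : IsBqSpace.{u, v, w} ↥D) : IsBqSpace.{u, v, w} E :=
  isBqSpace_of_dense_isBqSpace_general hD.isDenseEmbedding_val.isDenseInducing hBq
end

section
/- Let E be a B_q-space and let h : E → G be a continuous nearly open surjection onto a semi-regular Hausdorff space G. Then G is a B_r-space. -/
universe u v w

namespace NearlyOpen

variable {X Y Z : Type*} [TopologicalSpace X] [TopologicalSpace Y] [TopologicalSpace Z]
  {f : X → Y} {g : Y → Z}

theorem image_interior_closure_subset (hg : NearlyOpen g) (hgc : Continuous g) (s : Set Y) :
    g '' interior (closure s) ⊆ interior (closure (g '' s)) := by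
  have image_subset : g '' interior (closure s) ⊆ closure (g '' s) :=
    (Set.image_mono interior_subset).trans (image_closure_subset_closure_image hgc)
  calc g '' interior (closure s)
      ⊆ interior (closure (g '' interior (closure s))) := hg _ isOpen_interior
    _ ⊆ interior (closure (g '' s)) :=
      interior_mono (closure_minimal image_subset isClosed_closure)

theorem comp (hg : NearlyOpen g) (hgc : Continuous g) (hf : NearlyOpen f) :
    NearlyOpen (g ∘ f) := by
  intro U hU
  rw [Set.image_comp]
  calc g '' (f '' U)
      ⊆ g '' interior (closure (f '' U)) := Set.image_mono (hf U hU)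
    _ ⊆ interior (closure (g '' (f '' U))) := hg.image_interior_closure_subset hgc _

end NearlyOpen

/-- Let `E` be a B_q-space and `h : E → G` a continuous nearly open surjection onto a
semi-regular Hausdorff space `G`. Then `G` is a B_r-space. -/
theorem isBrSpace_of_isBqSpace_image (E : Type u) [TopologicalSpace E] [T2Space E]
    (G : Type w) [TopologicalSpace G] [T2Space G]
    (hBq : IsBqSpace.{u, v, w} E) (hG : SemiRegular G)
    (h : E → G) (hc : Continuous h) (hno : NearlyOpen h) (hs : Function.Surjective h) :
    IsBrSpace.{w, v} G := by
  intro F _ _ g hgc hgno hgb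
  have hgh_nearlyOpen : NearlyOpen (g ∘ h) := hgno.comp hgc hno
  have hgh_surjective : Function.Surjective (g ∘ h) := hgb.surjective.comp hs
  have hg_homeo : IsHomeomorph g :=
    hBq F G hG (g ∘ h) h g (hgc.comp hc) hgh_nearlyOpen hgh_surjective hc hs hgc hgb rfl
  exact hg_homeo.isOpenMap
end

section
/- Let E be a regular Hausdorff space which is m-Baire (player β has no winning strategy in the Michael game on E). Then every Gδ subset G of E, with the subspace topology, is m-Baire. -/
universe u v w

section Michael

variable {E : Type*} [TopologicalSpace E]

/-- The `n`-th move of a play `B₁ ⊇ A₁ ⊇ B₂ ⊇ A₂ ⊇ …` of the Michael game: the moves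
of player β (the sets `Bᵢ`) sit at even indices, the moves of player α (the sets `Aᵢ`)
at odd ones. -/
def michaelMove (B A : ℕ → Set E) (n : ℕ) : Set E :=
  if n % 2 = 0 then B (n / 2) else A (n / 2)

/-- The history of the first `n` moves of a Michael play (as a function that is `∅`
from index `n` onwards, so that a strategy can only use the past moves). -/
def michaelHist (B A : ℕ → Set E) (n : ℕ) : ℕ → Set E :=
  fun i => if i < n then michaelMove B A i else ∅

/-- A legal Michael history of length `n`: the moves are nonempty, decreasing, and
each move of player α (odd index) is relatively open in the preceding move. -/
def MichaelLegalHist (n : ℕ) (h : ℕ → Set E) : Prop :=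
  (∀ i < n, (h i).Nonempty) ∧
  (∀ i j : ℕ, i < j → j < n → h j ⊆ h i) ∧
  (∀ i < n, i % 2 = 1 → ∃ U : Set E, IsOpen U ∧ h i = h (i - 1) ∩ U)

/-- A strategy for player β in the Michael game: to every legal history of even length
it assigns a nonempty subset of the last move (the first move is an arbitrary nonempty
set). -/
def IsMichaelBetaStrat (σ : ℕ → (ℕ → Set E) → Set E) : Prop :=
  ∀ (n : ℕ) (h : ℕ → Set E), MichaelLegalHist n h → n % 2 = 0 →
    (σ n h).Nonempty ∧ (0 < n → σ n h ⊆ h (n - 1))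

/-- The play `(B, A)` follows the β-strategy `σ`. -/
def MichaelFollowsBeta (σ : ℕ → (ℕ → Set E) → Set E) (B A : ℕ → Set E) : Prop :=
  ∀ k : ℕ, B k = σ (2 * k) (michaelHist B A (2 * k))

/-- `σ` is a winning strategy for player β in the Michael game: it is a strategy for β
and in every play in which β follows `σ` and α plays legally (each `A k` nonempty and
relatively open in `B k`) we have `⋂ k, cl (A k) = ∅`. -/
def MichaelBetaWinning (σ : ℕ → (ℕ → Set E) → Set E) : Prop :=
  IsMichaelBetaStrat σ ∧
    ∀ B A : ℕ → Set E, MichaelFollowsBeta σ B A →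
      (∀ k : ℕ, (A k).Nonempty ∧ ∃ U : Set E, IsOpen U ∧ A k = B k ∩ U) →
      (⋂ k, closure (A k)) = ∅

end Michael

/-- A space is *m-Baire* if player β has no winning strategy in the Michael game. -/
def MBaire (E : Type*) [TopologicalSpace E] : Prop :=
  ¬ ∃ σ : ℕ → (ℕ → Set E) → Set E, MichaelBetaWinning σ

/-!
Only α's moves matter for β: a strategy amounts to a rule that answers α's first `k` moves, and such
a rule has to be legal only against legal moves of α.

Let `G = ⋂ k, O k` with each `O k` open, and let β have a winning rule on `G`. In `E`, β looks at
the traces on `G` of the moves of α, computes the answer `B` of the rule, and by regularity plays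
`B ∩ V` where `V` is open, meets `B` and has its closure inside `O k`. The traces of legal moves of
α are legal in `G` because `V` is open. A point of `⋂ k, cl (A k)` lies in every `O k`, hence in
`G`, which contradicts that the rule wins there.
-/

open Set Topology

section Rules

variable {X : Type*}

theorem michaelHist_two_mul {B A : ℕ → Set X} {n j : ℕ} (h : 2 * j < n) :
    michaelHist B A n (2 * j) = B j := by
  simp [michaelHist, michaelMove, h]

theorem michaelHist_two_mul_add_one {B A : ℕ → Set X} {n j : ℕ} (h : 2 * j + 1 < n) :
    michaelHist B A n (2 * j + 1) = A j := by
  have h_odd : (2 * j + 1) % 2 ≠ 0 := by omega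
  have h_half : (2 * j + 1) / 2 = j := by omega
  simp only [michaelHist, michaelMove, if_pos h, if_neg h_odd, h_half]

theorem michaelHist_congr {B B' A A' : ℕ → Set X} {k : ℕ} (hB : EqOn B B' (Iio k))
    (hA : EqOn A A' (Iio k)) : michaelHist B A (2 * k) = michaelHist B' A' (2 * k) := by
  funext i
  unfold michaelHist michaelMove
  split_ifs with hi
  · exact hB (show i / 2 < k by omega)
  · exact hA (show i / 2 < k by omega)
  · rfl

/-- The moves of player β following the strategy `σ` when player α plays `a`. The inner
conditionals spell out `michaelHist`, so that the recursion is seen to be well-founded. -/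
noncomputable def michaelReply (σ : ℕ → (ℕ → Set X) → Set X) (a : ℕ → Set X) (k : ℕ) : Set X :=
  σ (2 * k) fun i =>
    if _h : i < 2 * k then if i % 2 = 0 then michaelReply σ a (i / 2) else a (i / 2) else ∅
termination_by k
decreasing_by omega

theorem michaelFollowsBeta_michaelReply (σ : ℕ → (ℕ → Set X) → Set X) (a : ℕ → Set X) :
    MichaelFollowsBeta σ (michaelReply σ a) a := by
  intro k
  rw [michaelReply]
  rfl

theorem michaelReply_congr (σ : ℕ → (ℕ → Set X) → Set X) {a a' : ℕ → Set X} {k : ℕ}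
    (h : EqOn a a' (Iio k)) : michaelReply σ a k = michaelReply σ a' k := by
  induction k using Nat.strong_induction_on with
  | _ k ih =>
    have h_reply : EqOn (michaelReply σ a) (michaelReply σ a') (Iio k) := fun j hj =>
      ih j hj (h.mono (Iio_subset_Iio hj.le))
    rw [michaelFollowsBeta_michaelReply σ a k, michaelFollowsBeta_michaelReply σ a' k,
      michaelHist_congr h_reply h]

/-- `B` is a legal `k`-th move of player β after the moves `a 0, …, a (k - 1)` of player α. -/
def IsMichaelBetaMove (a : ℕ → Set X) (k : ℕ) (B : Set X) : Prop :=
  B.Nonempty ∧ ∀ j < k, B ⊆ a j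

theorem IsMichaelBetaMove.congr {a a' : ℕ → Set X} {k : ℕ} {B : Set X}
    (hB : IsMichaelBetaMove a k B) (h : EqOn a a' (Iio k)) : IsMichaelBetaMove a' k B :=
  ⟨hB.1, fun j hj => h hj ▸ hB.2 j hj⟩

open Classical in
/-- The strategy for player β that plays by the rule `b`. A legal history in which β has deviated
from `b` may make the answer of `b` illegal; then the last move is repeated. -/
noncomputable def michaelStratOfRule (b : (ℕ → Set X) → ℕ → Set X) (n : ℕ) (h : ℕ → Set X) :
    Set X :=
  let a := fun j => h (2 * j + 1)
  if IsMichaelBetaMove a (n / 2) (b a (n / 2)) then b a (n / 2) else h (n - 1)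

variable [TopologicalSpace X]

/-- `A` is a legal answer of player α to the move `B` of player β. -/
def IsMichaelAlphaMove (B A : Set X) : Prop :=
  A.Nonempty ∧ ∃ U : Set X, IsOpen U ∧ A = B ∩ U

theorem IsMichaelAlphaMove.subset {B A : Set X} (h : IsMichaelAlphaMove B A) : A ⊆ B := by
  obtain ⟨-, U, -, rfl⟩ := h
  exact inter_subset_left

/-- A rule for player β, giving β's moves `b a 0, b a 1, …` in terms of the moves `a` of player α:
it uses past moves only, and it is legal as long as α plays legally against it. -/
structure IsMichaelBetaRule (b : (ℕ → Set X) → ℕ → Set X) : Prop where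
  congr : ∀ {a a' k}, EqOn a a' (Iio k) → b a k = b a' k
  isMichaelBetaMove : ∀ {a k}, (∀ j < k, IsMichaelAlphaMove (b a j) (a j)) →
    IsMichaelBetaMove a k (b a k)

/-- A rule with which player β wins the Michael game. -/
structure IsWinningMichaelBetaRule (b : (ℕ → Set X) → ℕ → Set X) : Prop
    extends IsMichaelBetaRule b where
  iInter_closure_eq_empty : ∀ {a}, (∀ k, IsMichaelAlphaMove (b a k) (a k)) →
    ⋂ k, closure (a k) = ∅

theorem michaelLegalHist_of_moves {B A : ℕ → Set X} {k : ℕ}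
    (hB : ∀ j < k, IsMichaelBetaMove A j (B j))
    (hA : ∀ j < k, IsMichaelAlphaMove (B j) (A j)) :
    MichaelLegalHist (2 * k) (michaelHist B A (2 * k)) := by
  have h_between : ∀ i < 2 * k, A (i / 2) ⊆ michaelHist B A (2 * k) i ∧
      michaelHist B A (2 * k) i ⊆ B (i / 2) := by
    intro i hi
    have hAB := (hA (i / 2) (by omega)).subset
    simp only [michaelHist, michaelMove, if_pos hi]
    split_ifs
    exacts [⟨hAB, Subset.rfl⟩, ⟨Subset.rfl, hAB⟩]
  refine ⟨fun i hi => (hA (i / 2) (by omega)).1.mono (h_between i hi).1, fun i j hij hj => ?_,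
    fun i hi hi_odd => ?_⟩
  · rcases (Nat.div_le_div_right hij.le : i / 2 ≤ j / 2).lt_or_eq with h_lt | h_eq
    · exact (h_between j hj).2.trans <|
        ((hB (j / 2) (by omega)).2 (i / 2) h_lt).trans (h_between i (hij.trans hj)).1
    · obtain ⟨m, rfl, rfl⟩ : ∃ m, i = 2 * m ∧ j = 2 * m + 1 := ⟨i / 2, by omega, by omega⟩
      rw [michaelHist_two_mul_add_one hj, michaelHist_two_mul (by omega)]
      exact (hA m (by omega)).subset
  · obtain ⟨m, rfl⟩ : ∃ m, i = 2 * m + 1 := ⟨i / 2, by omega⟩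
    rw [michaelHist_two_mul_add_one hi, Nat.add_sub_cancel, michaelHist_two_mul (by omega)]
    exact (hA m (by omega)).2

theorem IsMichaelBetaStrat.isMichaelBetaMove {σ : ℕ → (ℕ → Set X) → Set X}
    (hσ : IsMichaelBetaStrat σ) {B A : ℕ → Set X} {k : ℕ}
    (h : MichaelLegalHist (2 * k) (michaelHist B A (2 * k))) :
    IsMichaelBetaMove A k (σ (2 * k) (michaelHist B A (2 * k))) := by
  obtain ⟨h_nonempty, h_subset⟩ := hσ _ _ h (Nat.mul_mod_right 2 k)
  refine ⟨h_nonempty, fun j hj => (h_subset (by omega)).trans ?_⟩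
  rw [← michaelHist_two_mul_add_one (B := B) (A := A) (show 2 * j + 1 < 2 * k by omega)]
  rcases (show 2 * j + 1 ≤ 2 * k - 1 by omega).lt_or_eq with h_lt | h_eq
  · exact h.2.1 _ _ h_lt (by omega)
  · rw [h_eq]

theorem IsMichaelBetaStrat.isMichaelBetaRule_michaelReply {σ : ℕ → (ℕ → Set X) → Set X}
    (hσ : IsMichaelBetaStrat σ) : IsMichaelBetaRule (michaelReply σ) where
  congr := michaelReply_congr σ
  isMichaelBetaMove {a k} hA := by
    induction k using Nat.strong_induction_on with
    | _ k ih =>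
      rw [michaelFollowsBeta_michaelReply σ a k]
      exact hσ.isMichaelBetaMove <| michaelLegalHist_of_moves
        (fun j hj => ih j hj fun i hi => hA i (hi.trans hj)) hA

theorem MichaelBetaWinning.isWinningMichaelBetaRule_michaelReply {σ : ℕ → (ℕ → Set X) → Set X}
    (hσ : MichaelBetaWinning σ) : IsWinningMichaelBetaRule (michaelReply σ) where
  toIsMichaelBetaRule := hσ.1.isMichaelBetaRule_michaelReply
  iInter_closure_eq_empty {a} hA := hσ.2 _ a (michaelFollowsBeta_michaelReply σ a) hA

theorem IsMichaelBetaRule.isMichaelBetaStrat_michaelStratOfRule {b : (ℕ → Set X) → ℕ → Set X}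
    (hb : IsMichaelBetaRule b) : IsMichaelBetaStrat (michaelStratOfRule b) := by
  intro n h hh hn
  dsimp only [michaelStratOfRule]
  split_ifs with h_move
  · refine ⟨h_move.1, fun hn_pos => ?_⟩
    obtain ⟨k, rfl⟩ : ∃ k, n = 2 * k + 2 := ⟨n / 2 - 1, by omega⟩
    exact h_move.2 k (by omega)
  · have hn_pos : 0 < n := by
      refine Nat.pos_of_ne_zero fun hn_zero => h_move ?_
      subst hn_zero
      exact hb.isMichaelBetaMove fun j hj => absurd hj j.not_lt_zero
    exact ⟨hh.1 _ (by omega), fun _ => Subset.rfl⟩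

theorem IsMichaelBetaRule.eq_of_michaelFollowsBeta {b : (ℕ → Set X) → ℕ → Set X}
    (hb : IsMichaelBetaRule b) {B A : ℕ → Set X}
    (hB : MichaelFollowsBeta (michaelStratOfRule b) B A)
    (hA : ∀ k, IsMichaelAlphaMove (B k) (A k)) : B = b A := by
  funext k
  induction k using Nat.strong_induction_on with
  | _ k ih =>
    set a := fun j => michaelHist B A (2 * k) (2 * j + 1) with ha
    have h_past : EqOn A a (Iio k) := fun j (hj : j < k) =>
      (michaelHist_two_mul_add_one (by omega)).symm
    have h_move : IsMichaelBetaMove a k (b a k) := by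
      rw [← hb.congr h_past]
      exact (hb.isMichaelBetaMove fun j hj => ih j hj ▸ hA j).congr h_past
    rw [hB k, michaelStratOfRule, Nat.mul_div_cancel_left k two_pos, ← ha]
    exact (if_pos h_move).trans (hb.congr h_past).symm

theorem IsWinningMichaelBetaRule.michaelBetaWinning_michaelStratOfRule
    {b : (ℕ → Set X) → ℕ → Set X} (hb : IsWinningMichaelBetaRule b) :
    MichaelBetaWinning (michaelStratOfRule b) := by
  refine ⟨hb.isMichaelBetaStrat_michaelStratOfRule, fun B A hB hA => ?_⟩
  obtain rfl := hb.eq_of_michaelFollowsBeta hB hA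
  exact hb.iInter_closure_eq_empty hA

theorem mBaire_iff_not_exists_isWinningMichaelBetaRule :
    MBaire X ↔ ¬∃ b : (ℕ → Set X) → ℕ → Set X, IsWinningMichaelBetaRule b :=
  not_congr ⟨fun ⟨_, hσ⟩ => ⟨_, hσ.isWinningMichaelBetaRule_michaelReply⟩,
    fun ⟨_, hb⟩ => ⟨_, hb.michaelBetaWinning_michaelStratOfRule⟩⟩

end Rules

section Transfer

variable {X Y : Type*}

/-- The rule on `X` that pulls the moves of player α back along `f : Y → X`, answers them by the
rule `b` on `Y` and plays the part of the image of this answer `B` that lies in `V k B`. -/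
def transferMichaelRule (f : Y → X) (V : ℕ → Set Y → Set X) (b : (ℕ → Set Y) → ℕ → Set Y)
    (A : ℕ → Set X) (k : ℕ) : Set X :=
  f '' b (fun j => f ⁻¹' A j) k ∩ V k (b (fun j => f ⁻¹' A j) k)

variable [TopologicalSpace X] [TopologicalSpace Y] {f : Y → X}

theorem IsMichaelAlphaMove.preimage {B : Set Y} {V A : Set X}
    (hA : IsMichaelAlphaMove (f '' B ∩ V) A) (hf : Continuous f) (hf_inj : f.Injective)
    (hV : IsOpen V) : IsMichaelAlphaMove B (f ⁻¹' A) := by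
  obtain ⟨⟨x, hx⟩, U, hU, rfl⟩ := hA
  obtain ⟨⟨⟨y, hy, rfl⟩, hyV⟩, hyU⟩ := hx
  refine ⟨⟨y, ⟨mem_image_of_mem f hy, hyV⟩, hyU⟩, f ⁻¹' (V ∩ U), (hV.inter hU).preimage hf, ?_⟩
  rw [inter_assoc, preimage_inter, preimage_image_eq B hf_inj]

variable {b : (ℕ → Set Y) → ℕ → Set Y} {V : ℕ → Set Y → Set X}

theorem IsMichaelBetaRule.isMichaelAlphaMove_preimage (hb : IsMichaelBetaRule b)
    (hf : Continuous f) (hf_inj : f.Injective) (hV : ∀ k B, B.Nonempty → IsOpen (V k B))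
    {A : ℕ → Set X} {k : ℕ}
    (hA : ∀ j < k, IsMichaelAlphaMove (transferMichaelRule f V b A j) (A j)) :
    ∀ j < k, IsMichaelAlphaMove (b (fun i => f ⁻¹' A i) j) (f ⁻¹' A j) := by
  intro j
  induction j using Nat.strong_induction_on with
  | _ j ih =>
    intro hj
    have hB := hb.isMichaelBetaMove fun i hi => ih i hi (hi.trans hj)
    exact (hA j hj).preimage hf hf_inj (hV j _ hB.1)

theorem IsMichaelBetaRule.transfer (hb : IsMichaelBetaRule b) (hf : Continuous f)
    (hf_inj : f.Injective) (hV : ∀ k B, B.Nonempty → IsOpen (V k B))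
    (hV_meets : ∀ k B, B.Nonempty → (f '' B ∩ V k B).Nonempty) :
    IsMichaelBetaRule (transferMichaelRule f V b) where
  congr {A A' k} h := by
    have h_traces : EqOn (fun j => f ⁻¹' A j) (fun j => f ⁻¹' A' j) (Iio k) := fun j hj =>
      congrArg (f ⁻¹' ·) (h hj)
    rw [transferMichaelRule, transferMichaelRule, hb.congr h_traces]
  isMichaelBetaMove {A k} hA := by
    obtain ⟨h_nonempty, h_subset⟩ :=
      hb.isMichaelBetaMove (hb.isMichaelAlphaMove_preimage hf hf_inj hV hA)
    exact ⟨hV_meets k _ h_nonempty, fun j hj =>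
      inter_subset_left.trans (image_subset_iff.2 (h_subset j hj))⟩

theorem IsWinningMichaelBetaRule.transfer (hb : IsWinningMichaelBetaRule b)
    (hf : IsEmbedding f) (hV : ∀ k B, B.Nonempty → IsOpen (V k B))
    (hV_meets : ∀ k B, B.Nonempty → (f '' B ∩ V k B).Nonempty) {O : ℕ → Set X}
    (hVO : ∀ k B, B.Nonempty → closure (V k B) ⊆ O k) (hO : ⋂ k, O k ⊆ range f) :
    IsWinningMichaelBetaRule (transferMichaelRule f V b) where
  toIsMichaelBetaRule :=
    hb.toIsMichaelBetaRule.transfer hf.continuous hf.injective hV hV_meets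
  iInter_closure_eq_empty {A} hA := by
    have h_traces : ∀ k, IsMichaelAlphaMove (b (fun j => f ⁻¹' A j) k) (f ⁻¹' A k) := fun k =>
      hb.isMichaelAlphaMove_preimage hf.continuous hf.injective hV (fun j _ => hA j)
        k k.lt_succ_self
    have h_closure : ∀ k, closure (f ⁻¹' A k) = f ⁻¹' closure (A k) := fun k => by
      have h_range : A k ⊆ range f :=
        (hA k).subset.trans (inter_subset_left.trans (image_subset_range f _))
      rw [hf.closure_eq_preimage_closure_image, image_preimage_eq_of_subset h_range]
    have h_subset : ∀ k, closure (A k) ⊆ O k := fun k =>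
      (closure_mono ((hA k).subset.trans inter_subset_right)).trans <|
        hVO k _ (hb.isMichaelBetaMove fun j _ => h_traces j).1
    refine eq_empty_of_forall_notMem fun x hx => ?_
    obtain ⟨y, rfl⟩ := hO (iInter_mono h_subset hx)
    have hy : y ∈ ⋂ k, closure (f ⁻¹' A k) := by
      simpa only [h_closure, mem_iInter, mem_preimage] using hx
    rw [hb.iInter_closure_eq_empty h_traces] at hy
    exact hy

theorem exists_isOpen_inter_nonempty_closure_subset [RegularSpace X] {B O : Set X} (hO : IsOpen O)
    (h : (B ∩ O).Nonempty) : ∃ V, IsOpen V ∧ (B ∩ V).Nonempty ∧ closure V ⊆ O := by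
  obtain ⟨x, hxB, hxO⟩ := h
  obtain ⟨V, hV, hxV, hVO⟩ := isCompact_singleton.exists_isOpen_closure_subset
    (nhdsSet_singleton (x := x) ▸ hO.mem_nhds hxO)
  exact ⟨V, hV, ⟨x, hxB, hxV rfl⟩, hVO⟩

theorem mBaire_gdelta_of_mBaire_general [RegularSpace X] (hX : MBaire X) (hf : IsEmbedding f)
    (hG : IsGδ (range f)) : MBaire Y := by
  rw [mBaire_iff_not_exists_isWinningMichaelBetaRule] at hX ⊢
  rintro ⟨b, hb⟩
  obtain ⟨O, hO, h_range⟩ := isGδ_iff_eq_iInter_nat.1 hG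
  have h_shrink : ∀ (k : ℕ) (B : Set Y), B.Nonempty →
      ∃ V, IsOpen V ∧ (f '' B ∩ V).Nonempty ∧ closure V ⊆ O k := by
    rintro k B ⟨y, hy⟩
    have hyO : f y ∈ O k := mem_iInter.1 (h_range ▸ mem_range_self y) k
    exact exists_isOpen_inter_nonempty_closure_subset (hO k) ⟨f y, mem_image_of_mem f hy, hyO⟩
  choose! V hV hV_meets hVO using h_shrink
  exact hX ⟨_, hb.transfer hf hV hV_meets hVO h_range.ge⟩

end Transfer

/-- Let `E` be a regular Hausdorff m-Baire space. Then every Gδ subset of `E`, with the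
subspace topology, is m-Baire. -/
theorem mBaire_gdelta_of_mBaire (E : Type u) [TopologicalSpace E]
    [RegularSpace E] [T2Space E]
    (hE : MBaire E) (G : Set E) (hG : IsGδ G) : MBaire ↥G :=
  mBaire_gdelta_of_mBaire_general hE .subtypeVal (by rwa [Subtype.range_coe])
end
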